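/- arXiv:1506.06253 — 2 statements merged into one kernel-verified Lean document; each statement's English description precedes it below -/
import Mathlib

section
/- Assume P does not lie on a median of ABC (a line joining a vertex to the midpoint of the opposite side). Let Z̃ be the reflection of K⁻¹(Z) through O. Then Z̃ lies on both the conic C_P and the circumconic C̃_O; indeed Z̃ is the fourth point of intersection of C_P and C̃_O, the other three being the vertices A, B, C. -/
noncomputable section

/-- The real affine plane. -/
abbrev Pt : Type := ℝ × ℝ

/-- `u` and `v` are parallel vectors (the zero vector is parallel to everything). -/
def Par (u v : Pt) : Prop := ∃ t : ℝ, u = t • v ∨ v = t • u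

/-- The centroid of the triangle `ABC`. -/
def cent (A B C : Pt) : Pt := (3⁻¹ : ℝ) • (A + B + C)

/-- The homothety with center `Z` and ratio `r`. -/
def homoth (Z : Pt) (r : ℝ) (X : Pt) : Pt := Z + r • (X - Z)

/-- The value at `p` of the quadratic polynomial with coefficient vector `c`. -/
def qval (c : Fin 6 → ℝ) (p : Pt) : ℝ :=
  c 0 * p.1 ^ 2 + c 1 * p.1 * p.2 + c 2 * p.2 ^ 2 + c 3 * p.1 + c 4 * p.2 + c 5

/-- `S` is a conic: the zero locus of a real polynomial of total degree 2. -/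
def IsConic (S : Set Pt) : Prop :=
  ∃ c : Fin 6 → ℝ, ¬(c 0 = 0 ∧ c 1 = 0 ∧ c 2 = 0) ∧ S = {p | qval c p = 0}

/-- `Z` is a center of symmetry of `S`. -/
def IsCenterOf (Z : Pt) (S : Set Pt) : Prop :=
  ∀ p ∈ S, (2 : ℝ) • Z - p ∈ S

/-- The gradient at `p` of the quadratic polynomial with coefficients `c`. -/
def qgrad (c : Fin 6 → ℝ) (p : Pt) : Pt :=
  (2 * c 0 * p.1 + c 1 * p.2 + c 3, c 1 * p.1 + 2 * c 2 * p.2 + c 4)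

/-- The line through `X` and `Y`. -/
def lineThru (X Y : Pt) : Set Pt := {p | ∃ t : ℝ, p = X + t • (Y - X)}

/-- `L` is the tangent line at the nonsingular point `p` of the conic with coefficients `c`. -/
def IsTangentLineAt (c : Fin 6 → ℝ) (L : Set Pt) (p : Pt) : Prop :=
  qval c p = 0 ∧ qgrad c p ≠ 0 ∧
  L = {q | (qgrad c p).1 * (q.1 - p.1) + (qgrad c p).2 * (q.2 - p.2) = 0}

/-!
In the model case, `P` is the Gergonne point: `Q` is the incenter, `C̃_O` the circumcircle,
`H = K⁻¹(O)` the orthocenter and `C_P` the Feuerbach hyperbola. In general the parallelisms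
defining `O` make the barycentric coordinates of `H = K⁻¹(O)` proportional to `xᵢ / (s - xᵢ²)`,
where `xᵢ` are those of `P` and `s = x₀x₁ + x₁x₂ + x₂x₀`, and this point lies on the circumconic
`C_P` through `P` and `Q`. Since `2O - K⁻¹(Z) = 2Z - H`, the point `Z̃` is the antipode of `H` on
`C_P`.

The circumconic centered at the complement of a point `M` with barycentric coordinates `mᵢ` has the
equation `m₀(1 - m₀)w₁w₂ + m₁(1 - m₁)w₂w₀ + m₂(1 - m₂)w₀w₁ = 0`, which is symmetric in `M` and `W`.
The circumconics with centers `Z` and `O` being those of `M = K⁻¹(Z)` and `M = H`, the incidence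
`H ∈ C_P` gives `K⁻¹(Z) ∈ C̃_O`, hence its reflection `Z̃` in the center `O` is on `C̃_O`.
Conversely, if `W` is a common point of the two conics other than a vertex, the equation relating
`H` and `W` says that their midpoint is a center of the circumconic through `H` and `W`, which is
`C_P`. This midpoint is therefore `Z`, and `W` is the antipode of `H`.
-/

section AffineMap

variable {k V : Type*} [AddCommGroup V]

theorem exists_eq_linear_add [Ring k] [Module k V] (f : V →ᵃ[k] k) :
    ∃ (g : V →ₗ[k] k) (a : k), ∀ v, f v = g v + a :=
  ⟨f.linear, f 0, congrFun f.decomp⟩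

theorem map_two_smul_sub [CommRing k] [Module k V] (f : V →ᵃ[k] k) (O W : V) :
    f ((2 : k) • O - W) = 2 * f O - f W := by
  obtain ⟨g, a, hf⟩ := exists_eq_linear_add f
  simp only [hf, map_sub, map_smul, smul_eq_mul]
  ring

theorem map_combination [CommRing k] [Module k V] (f : V →ᵃ[k] k) (A B C : V) {x y z : k}
    (h : x + y + z = 1) : f (x • A + y • B + z • C) = x * f A + y * f B + z * f C := by
  obtain ⟨g, a, hf⟩ := exists_eq_linear_add f
  simp only [hf, map_add, map_smul, smul_eq_mul]
  linear_combination -a * h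

theorem map_mul_map_comm_of_collinear [Field k] [Module k V] {X Y Z : V}
    (h : Collinear k {X, Y, Z}) (f g : V →ᵃ[k] k) (hf : f X = 0) (hg : g X = 0) :
    f Y * g Z = g Y * f Z := by
  rw [collinear_iff_of_mem (p₀ := X) (by simp)] at h
  obtain ⟨v, hv⟩ := h
  obtain ⟨r, rfl⟩ := hv Y (by simp)
  obtain ⟨t, rfl⟩ := hv Z (by simp)
  rw [f.map_vadd, g.map_vadd, f.map_vadd, g.map_vadd, hf, hg]
  simp only [map_smul, smul_eq_mul, vadd_eq_add]
  ring

theorem map_homoth_cent (f : Pt →ᵃ[ℝ] ℝ) (A B C W : Pt) (r : ℝ) :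
    f (homoth (cent A B C) r W) = (1 - r) / 3 * (f A + f B + f C) + r * f W := by
  obtain ⟨g, a, hf⟩ := exists_eq_linear_add f
  simp only [homoth, cent, hf, map_add, map_sub, map_smul, smul_eq_mul]
  ring

theorem Par.map_mul_map_comm {u v : Pt} (h : Par u v) (f g : Pt →ₗ[ℝ] ℝ) :
    f u * g v = g u * f v := by
  obtain ⟨t, rfl | rfl⟩ := h <;> simp only [map_smul, smul_eq_mul] <;> ring

end AffineMap

theorem exists_distinct_indices (i : Fin 3) : ∃ j k, i ≠ j ∧ j ≠ k ∧ i ≠ k := by decide +revert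

theorem exists_third_index {i j : Fin 3} (hij : i ≠ j) : ∃ k, i ≠ k ∧ k ≠ j := by decide +revert

theorem eq_or_eq_or_eq_of_distinct {i j k : Fin 3} (hij : i ≠ j) (hjk : j ≠ k) (hik : i ≠ k)
    (l : Fin 3) : l = i ∨ l = j ∨ l = k := by decide +revert

section Barycentric

variable {k V : Type*} [CommRing k] [AddCommGroup V] [Module k V] (b : AffineBasis (Fin 3) k V)

theorem coord_add_coord_add_coord {i j l : Fin 3} (hij : i ≠ j) (hjl : j ≠ l) (hil : i ≠ l)
    (W : V) : b.coord i W + b.coord j W + b.coord l W = 1 := by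
  have huniv : (Finset.univ : Finset (Fin 3)) = {i, j, l} := by decide +revert
  rw [← b.sum_coord_apply_eq_one W, huniv, Finset.sum_insert (by simp [hij, hil]),
    Finset.sum_pair hjl, add_assoc]

theorem sum_coord_eq_one (W : V) : b.coord 0 W + b.coord 1 W + b.coord 2 W = 1 := by
  rw [← b.sum_coord_apply_eq_one W, Fin.sum_univ_three]

theorem eq_combination_coord (W : V) :
    W = b.coord 0 W • b 0 + b.coord 1 W • b 1 + b.coord 2 W • b 2 := by
  rw [← Fin.sum_univ_three fun i => b.coord i W • b i, b.linear_combination_coord_eq_self]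

theorem sum_coord_vertex (i : Fin 3) : b.coord i (b 0) + b.coord i (b 1) + b.coord i (b 2) = 1 := by
  fin_cases i <;> simp [b.coord_apply]

theorem coord_combination {x y z : k} (h : x + y + z = 1) :
    b.coord 0 (x • b 0 + y • b 1 + z • b 2) = x ∧
      b.coord 1 (x • b 0 + y • b 1 + z • b 2) = y ∧
      b.coord 2 (x • b 0 + y • b 1 + z • b 2) = z := by
  simp [map_combination _ _ _ _ h, b.coord_apply]

variable {b}

theorem eq_vertex_of_coord_eq_zero {i j l : Fin 3} (hij : i ≠ j) (hjl : j ≠ l) (hil : i ≠ l)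
    {W : V} (hi : b.coord i W = 0) (hj : b.coord j W = 0) : W = b l := by
  have hl : b.coord l W = 1 := by
    linear_combination coord_add_coord_add_coord b hij hjl hil W - hi - hj
  refine b.ext_elem fun m => ?_
  obtain rfl | rfl | rfl := eq_or_eq_or_eq_of_distinct hij hjl hil m
  · rw [hi, b.coord_apply_ne hil]
  · rw [hj, b.coord_apply_ne hjl]
  · rw [hl, b.coord_apply_eq]

end Barycentric

theorem exists_affineBasis_of_affineIndependent {A B C : Pt}
    (h : AffineIndependent ℝ ![A, B, C]) :
    ∃ b : AffineBasis (Fin 3) ℝ Pt, b 0 = A ∧ b 1 = B ∧ b 2 = C :=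
  ⟨⟨_, h, h.affineSpan_eq_top_iff_card_eq_finrank_add_one.2 (by simp)⟩, rfl, rfl, rfl⟩

theorem eq_zero_of_qval_eq_zero {c : Fin 6 → ℝ} (h : ∀ p, qval c p = 0) : c = 0 := by
  have h₀ := h (0, 0)
  have h₁ := h (1, 0)
  have h₂ := h (-1, 0)
  have h₃ := h (0, 1)
  have h₄ := h (0, -1)
  have h₅ := h (1, 1)
  simp only [qval] at h₀ h₁ h₂ h₃ h₄ h₅
  have hc₀ : c 0 = 0 := by linarith
  have hc₁ : c 1 = 0 := by linarith
  have hc₂ : c 2 = 0 := by linarith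
  have hc₃ : c 3 = 0 := by linarith
  have hc₄ : c 4 = 0 := by linarith
  have hc₅ : c 5 = 0 := by linarith
  ext i
  fin_cases i <;> assumption

section Triangle

variable (b : AffineBasis (Fin 3) ℝ Pt)

/-- The quadratic form `c₀ w₁ w₂ + c₁ w₂ w₀ + c₂ w₀ w₁` in the barycentric coordinates `wᵢ` of `W`,
whose zero locus is a circumconic of the triangle `b`; `c = 1` gives the Steiner circumellipse. -/
def circumForm (c : Fin 3 → ℝ) (W : Pt) : ℝ :=
  c 0 * (b.coord 1 W * b.coord 2 W) + c 1 * (b.coord 2 W * b.coord 0 W) +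
    c 2 * (b.coord 0 W * b.coord 1 W)

/-- The circumconic of the triangle `b` with coefficients `c`. It is not required to be
nondegenerate. -/
def circumconic (c : Fin 3 → ℝ) : Set Pt := {W | circumForm b c W = 0}

/-- The inverse complement map `K⁻¹` of the triangle `b`. -/
def anticomplement (W : Pt) : Pt := homoth (cent (b 0) (b 1) (b 2)) (-2) W

/-- The equation in `W` of the circumconic whose center is the complement of `M`. It is used for
its symmetry in `M` and `W`. -/
def anticenterForm (M W : Pt) : ℝ :=
  circumForm b (fun i => b.coord i M * (1 - b.coord i M)) W

/-- The coefficients of the circumconic through `U` and `V`: the cross product of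
`(u₁u₂, u₂u₀, u₀u₁)` and `(v₁v₂, v₂v₀, v₀v₁)`, where `uᵢ` and `vᵢ` are the barycentric coordinates
of `U` and `V`. -/
def chordCoeff (U V : Pt) : Fin 3 → ℝ :=
  ![b.coord 0 U * b.coord 0 V * (b.coord 2 U * b.coord 1 V - b.coord 1 U * b.coord 2 V),
    b.coord 1 U * b.coord 1 V * (b.coord 0 U * b.coord 2 V - b.coord 2 U * b.coord 0 V),
    b.coord 2 U * b.coord 2 V * (b.coord 1 U * b.coord 0 V - b.coord 0 U * b.coord 1 V)]

/-- `Q` is the isotomcomplement of `P`: its barycentric coordinates are proportional to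
`xᵢ (1 - xᵢ)`, where `xᵢ` are those of `P`. The denominator is cleared, so this determines `Q` only
when `P` is not on the Steiner circumellipse `circumForm b 1 P = 0`. -/
def IsIsotomcomplement (P Q : Pt) : Prop :=
  ∀ i, 2 * circumForm b 1 P * b.coord i Q = b.coord i P * (1 - b.coord i P)

/-- `H` is the generalized orthocenter of `P`: its barycentric coordinates are proportional to
`xᵢ / (s - xᵢ²)`, where `xᵢ` are those of `P` and `s = circumForm b 1 P`. The denominators are
cleared; for `xᵢ ≠ 0` the condition `r ≠ 0` forces them to be nonzero. -/
def IsGeneralizedOrthocenter (P H : Pt) : Prop :=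
  ∃ r : ℝ, r ≠ 0 ∧ ∀ i, b.coord i H * (circumForm b 1 P - b.coord i P ^ 2) = r * b.coord i P

theorem circumForm_eq {i j k : Fin 3} (hij : i ≠ j) (hjk : j ≠ k) (hik : i ≠ k)
    (c : Fin 3 → ℝ) (W : Pt) :
    circumForm b c W = c i * (b.coord j W * b.coord k W) + c j * (b.coord k W * b.coord i W) +
      c k * (b.coord i W * b.coord j W) := by
  unfold circumForm
  fin_cases i <;> fin_cases j <;> fin_cases k <;> grind

theorem circumForm_one (W : Pt) :
    circumForm b 1 W = b.coord 0 W * b.coord 1 W + b.coord 1 W * b.coord 2 W +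
      b.coord 2 W * b.coord 0 W := by
  simp only [circumForm, Pi.one_apply]
  ring

theorem circumForm_one_add_sq {i j k : Fin 3} (hij : i ≠ j) (hjk : j ≠ k) (hik : i ≠ k)
    (P : Pt) :
    circumForm b 1 P + b.coord i P ^ 2 = (1 - b.coord j P) * (1 - b.coord k P) := by
  rw [circumForm_eq b hij hjk hik, ← coord_add_coord_add_coord b hij hjk hik P]
  simp only [Pi.one_apply]
  ring

variable {b}

theorem coord_anticomplement (i : Fin 3) (W : Pt) :
    b.coord i (anticomplement b W) = 1 - 2 * b.coord i W := by
  rw [anticomplement, map_homoth_cent, sum_coord_vertex]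
  ring

theorem IsConic.exists_eq_circumconic {S : Set Pt} (hS : IsConic S) (hmem : ∀ i, b i ∈ S) :
    ∃ c, c ≠ 0 ∧ S = circumconic b c := by
  obtain ⟨a, ha, rfl⟩ := hS
  -- On a line through two points `U` and `V` of the conic, the polynomial takes the value
  -- `-leading (U - V) * t * (1 - t)` at the point of parameter `t`.
  let leading (v : Pt) : ℝ := a 0 * v.1 ^ 2 + a 1 * v.1 * v.2 + a 2 * v.2 ^ 2
  let c : Fin 3 → ℝ := ![-leading (b 1 - b 2), -leading (b 2 - b 0), -leading (b 0 - b 1)]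
  have hform : ∀ W, qval a W = circumForm b c W := by
    intro W
    have h₀ : qval a (b 0) = 0 := hmem 0
    have h₁ : qval a (b 1) = 0 := hmem 1
    have h₂ : qval a (b 2) = 0 := hmem 2
    have hx : b.coord 0 W = 1 - b.coord 1 W - b.coord 2 W := by
      linarith [sum_coord_eq_one b W]
    conv_lhs => rw [eq_combination_coord b W]
    simp only [qval, circumForm, leading, c, Matrix.cons_val, hx, Prod.fst_add, Prod.snd_add,
      Prod.smul_fst, Prod.smul_snd, Prod.fst_sub, Prod.snd_sub, smul_eq_mul] at h₀ h₁ h₂ ⊢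
    linear_combination (1 - b.coord 1 W - b.coord 2 W) * h₀ + b.coord 1 W * h₁ + b.coord 2 W * h₂
  refine ⟨c, fun hc => ha ?_, Set.ext fun W => by rw [circumconic, Set.mem_ofPred_eq, hform]; rfl⟩
  have ha0 : a = 0 := eq_zero_of_qval_eq_zero fun W => by simp [hform, hc, circumForm]
  simp [ha0]

theorem isCenterOf_circumconic_iff {c : Fin 3 → ℝ} {O : Pt} :
    IsCenterOf O (circumconic b c) ↔
      c 1 * b.coord 2 O + c 2 * b.coord 1 O = 2 * circumForm b c O ∧
      c 2 * b.coord 0 O + c 0 * b.coord 2 O = 2 * circumForm b c O ∧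
      c 0 * b.coord 1 O + c 1 * b.coord 0 O = 2 * circumForm b c O := by
  constructor
  · intro hO
    have hvertex (i : Fin 3) : circumForm b c ((2 : ℝ) • O - b i) = 0 :=
      hO (b i) (by fin_cases i <;> simp [circumconic, circumForm, b.coord_apply])
    have h₀ := hvertex 0
    have h₁ := hvertex 1
    have h₂ := hvertex 2
    simp only [circumForm, map_two_smul_sub, b.coord_apply, Fin.reduceEq, if_true, if_false]
      at h₀ h₁ h₂ ⊢
    refine ⟨?_, ?_, ?_⟩ <;> linarith
  · rintro ⟨h₀, h₁, h₂⟩ W hW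
    have hform : circumForm b c O = c 0 * (b.coord 1 O * b.coord 2 O) +
      c 1 * (b.coord 2 O * b.coord 0 O) + c 2 * (b.coord 0 O * b.coord 1 O) := rfl
    simp only [circumconic, Set.mem_ofPred_eq, circumForm.eq_def b c W,
      circumForm.eq_def b c (_ - _), map_two_smul_sub] at hW ⊢
    linear_combination hW - 2 * b.coord 0 W * h₀ - 2 * b.coord 1 W * h₁ - 2 * b.coord 2 W * h₂
      - 4 * circumForm b c O * sum_coord_eq_one b W - 4 * hform

theorem isCenterOf_circumconic_of_eq {c : Fin 3 → ℝ} {O : Pt}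
    (h₀ : c 1 * b.coord 2 O + c 2 * b.coord 1 O = c 2 * b.coord 0 O + c 0 * b.coord 2 O)
    (h₁ : c 2 * b.coord 0 O + c 0 * b.coord 2 O = c 0 * b.coord 1 O + c 1 * b.coord 0 O) :
    IsCenterOf O (circumconic b c) := by
  have heuler : b.coord 0 O * (c 1 * b.coord 2 O + c 2 * b.coord 1 O) +
      b.coord 1 O * (c 2 * b.coord 0 O + c 0 * b.coord 2 O) +
      b.coord 2 O * (c 0 * b.coord 1 O + c 1 * b.coord 0 O) = 2 * circumForm b c O := by
    unfold circumForm
    ring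
  have h₂ : c 0 * b.coord 1 O + c 1 * b.coord 0 O = 2 * circumForm b c O := by
    rwa [h₀, h₁, ← add_mul, ← add_mul, sum_coord_eq_one b O, one_mul] at heuler
  exact isCenterOf_circumconic_iff.2 ⟨(h₀.trans h₁).trans h₂, h₁.trans h₂, h₂⟩

theorem anticenterForm_comm (M W : Pt) : anticenterForm b M W = anticenterForm b W M := by
  have hM : b.coord 0 M = 1 - b.coord 1 M - b.coord 2 M := by linarith [sum_coord_eq_one b M]
  have hW : b.coord 0 W = 1 - b.coord 1 W - b.coord 2 W := by linarith [sum_coord_eq_one b W]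
  simp only [anticenterForm, circumForm, hM, hW]
  ring

theorem anticenterForm_self (M : Pt) :
    anticenterForm b M M = 2 * (b.coord 0 M * b.coord 1 M * b.coord 2 M) := by
  unfold anticenterForm circumForm
  linear_combination -(b.coord 0 M * b.coord 1 M * b.coord 2 M) * sum_coord_eq_one b M

section Center

variable {c : Fin 3 → ℝ} {O : Pt}

theorem coeff_mul_coord_center (hO : IsCenterOf O (circumconic b c)) :
    c 0 * (b.coord 1 O * b.coord 2 O) = circumForm b c O * (1 - 2 * b.coord 0 O) ∧
    c 1 * (b.coord 2 O * b.coord 0 O) = circumForm b c O * (1 - 2 * b.coord 1 O) ∧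
    c 2 * (b.coord 0 O * b.coord 1 O) = circumForm b c O * (1 - 2 * b.coord 2 O) := by
  obtain ⟨h₀, h₁, h₂⟩ := isCenterOf_circumconic_iff.1 hO
  have hsum := sum_coord_eq_one b O
  refine ⟨?_, ?_, ?_⟩
  · linear_combination (-b.coord 0 O * h₀ + b.coord 1 O * h₁ + b.coord 2 O * h₂) / 2
      + circumForm b c O * hsum
  · linear_combination (b.coord 0 O * h₀ - b.coord 1 O * h₁ + b.coord 2 O * h₂) / 2
      + circumForm b c O * hsum
  · linear_combination (b.coord 0 O * h₀ + b.coord 1 O * h₁ - b.coord 2 O * h₂) / 2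
      + circumForm b c O * hsum

theorem circumForm_center_mul_anticenterForm (hO : IsCenterOf O (circumconic b c)) (W : Pt) :
    circumForm b c O * anticenterForm b (anticomplement b O) W =
      2 * (b.coord 0 O * b.coord 1 O * b.coord 2 O) * circumForm b c W := by
  obtain ⟨h₀, h₁, h₂⟩ := coeff_mul_coord_center hO
  rw [anticenterForm, circumForm.eq_def b _ W, circumForm.eq_def b c W]
  simp only [coord_anticomplement]
  linear_combination -2 * b.coord 0 O * (b.coord 1 W * b.coord 2 W) * h₀
    - 2 * b.coord 1 O * (b.coord 2 W * b.coord 0 W) * h₁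
    - 2 * b.coord 2 O * (b.coord 0 W * b.coord 1 W) * h₂

theorem circumForm_center_ne_zero_of_coord_ne_zero (hO : IsCenterOf O (circumconic b c))
    (hc : c ≠ 0) (hcoord : ∀ i, b.coord i O ≠ 0) : circumForm b c O ≠ 0 := by
  intro h
  have hcO := coeff_mul_coord_center hO
  simp only [h, zero_mul, mul_eq_zero, hcoord, or_false] at hcO
  exact hc (funext fun i => by fin_cases i <;> simp [hcO])

theorem circumForm_center_ne_zero_of_coeff_ne_zero (hO : IsCenterOf O (circumconic b c))
    (hc : ∀ i, c i ≠ 0) : circumForm b c O ≠ 0 := by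
  intro h
  obtain ⟨h₀, h₁, h₂⟩ := isCenterOf_circumconic_iff.1 hO
  rw [h, mul_zero] at h₀ h₁ h₂
  have hz₀ : b.coord 0 O = 0 := by
    apply mul_left_cancel₀ (mul_ne_zero (hc 1) (hc 2))
    linear_combination (-c 0 * h₀ + c 1 * h₁ + c 2 * h₂) / 2
  have hz₁ : b.coord 1 O = 0 := by
    apply mul_left_cancel₀ (mul_ne_zero (hc 2) (hc 0))
    linear_combination (c 0 * h₀ - c 1 * h₁ + c 2 * h₂) / 2
  have hz₂ : b.coord 2 O = 0 := by
    apply mul_left_cancel₀ (mul_ne_zero (hc 0) (hc 1))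
    linear_combination (c 0 * h₀ + c 1 * h₁ - c 2 * h₂) / 2
  simpa [hz₀, hz₁, hz₂] using sum_coord_eq_one b O

theorem mem_circumconic_iff_anticenterForm_eq_zero (hO : IsCenterOf O (circumconic b c))
    (hc : c ≠ 0) (hcoord : ∀ i, b.coord i O ≠ 0) {W : Pt} :
    W ∈ circumconic b c ↔ anticenterForm b (anticomplement b O) W = 0 := by
  have hmul := circumForm_center_mul_anticenterForm hO W
  have hform := circumForm_center_ne_zero_of_coord_ne_zero hO hc hcoord
  rw [← mul_eq_zero_iff_left hform, hmul]
  simp [circumconic, hcoord]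

theorem anticenterForm_eq_zero_of_mem (hO : IsCenterOf O (circumconic b c))
    (hc : ∀ i, c i ≠ 0) {W : Pt} (hW : W ∈ circumconic b c) :
    anticenterForm b (anticomplement b O) W = 0 := by
  have hmul := circumForm_center_mul_anticenterForm hO W
  rw [show circumForm b c W = 0 from hW, mul_zero] at hmul
  exact (mul_eq_zero.1 hmul).resolve_left (circumForm_center_ne_zero_of_coeff_ne_zero hO hc)

end Center

theorem coord_ne_zero_of_mem_circumconic {c : Fin 3 → ℝ} (hc : ∀ i, c i ≠ 0) {W : Pt}
    (hW : W ∈ circumconic b c) (hvertex : ∀ i, W ≠ b i) (i : Fin 3) : b.coord i W ≠ 0 := by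
  have hpair (i j k : Fin 3) (hij : i ≠ j) (hjk : j ≠ k) (hik : i ≠ k) (hi : b.coord i W = 0) :
      b.coord j W ≠ 0 := fun hj => hvertex k (eq_vertex_of_coord_eq_zero hij hjk hik hi hj)
  intro hi
  obtain ⟨j, k, hij, hjk, hik⟩ := exists_distinct_indices i
  have hprod : c i * (b.coord j W * b.coord k W) = 0 := by
    have hW' : circumForm b c W = 0 := hW
    rw [circumForm_eq b hij hjk hik, hi] at hW'
    linarith
  simp [hc, hpair i j k hij hjk hik hi, hpair i k j hik hjk.symm hij hi] at hprod

section Chord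

variable {c : Fin 3 → ℝ} {U V : Pt}

theorem exists_eq_smul_chordCoeff (hU : U ∈ circumconic b c) (hV : V ∈ circumconic b c)
    (hne : chordCoeff b U V ≠ 0) : ∃ k : ℝ, c = k • chordCoeff b U V := by
  have hcross (i j : Fin 3) : c i * chordCoeff b U V j = c j * chordCoeff b U V i := by
    simp only [circumconic, Set.mem_ofPred_eq, circumForm] at hU hV
    have h₀₁ : c 0 * chordCoeff b U V 1 = c 1 * chordCoeff b U V 0 := by
      simp only [chordCoeff, Matrix.cons_val]
      linear_combination b.coord 0 U * b.coord 1 U * hV - b.coord 0 V * b.coord 1 V * hU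
    have h₁₂ : c 1 * chordCoeff b U V 2 = c 2 * chordCoeff b U V 1 := by
      simp only [chordCoeff, Matrix.cons_val]
      linear_combination b.coord 1 U * b.coord 2 U * hV - b.coord 1 V * b.coord 2 V * hU
    have h₂₀ : c 2 * chordCoeff b U V 0 = c 0 * chordCoeff b U V 2 := by
      simp only [chordCoeff, Matrix.cons_val]
      linear_combination b.coord 2 U * b.coord 0 U * hV - b.coord 2 V * b.coord 0 V * hU
    fin_cases i <;> fin_cases j <;>
      first | rfl | assumption | (symm; assumption)
  obtain ⟨j, hj⟩ := Function.ne_iff.1 hne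
  refine ⟨c j / chordCoeff b U V j, funext fun i => ?_⟩
  rw [Pi.smul_apply, smul_eq_mul, div_mul_eq_mul_div]
  exact eq_div_of_mul_eq hj (hcross i j)

theorem chordCoeff_ne_zero (hU : ∀ i, b.coord i U ≠ 0) (hV : ∀ i, b.coord i V ≠ 0)
    (hUV : U ≠ V) : chordCoeff b U V ≠ 0 := by
  intro h
  have hg (i : Fin 3) : chordCoeff b U V i = 0 := congrFun h i
  have h₀ := hg 0
  have h₁ := hg 1
  have h₂ := hg 2
  simp only [chordCoeff, Matrix.cons_val, mul_eq_zero, hU, hV, false_or] at h₀ h₁ h₂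
  have hsU := sum_coord_eq_one b U
  have hsV := sum_coord_eq_one b V
  have heq₀ : b.coord 0 U = b.coord 0 V := by
    linear_combination -b.coord 0 U * hsV + b.coord 0 V * hsU + h₁ - h₂
  have heq₁ : b.coord 1 U = b.coord 1 V := by
    linear_combination -b.coord 1 U * hsV + b.coord 1 V * hsU + h₂ - h₀
  have heq₂ : b.coord 2 U = b.coord 2 V := by
    linear_combination -b.coord 2 U * hsV + b.coord 2 V * hsU + h₀ - h₁
  exact hUV (b.ext_elem fun i => by fin_cases i <;> assumption)

theorem isCenterOf_midpoint (hU : U ∈ circumconic b c) (hV : V ∈ circumconic b c)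
    (hne : chordCoeff b U V ≠ 0) (hform : anticenterForm b U V = 0) :
    IsCenterOf (midpoint ℝ U V) (circumconic b c) := by
  obtain ⟨k, rfl⟩ := exists_eq_smul_chordCoeff hU hV hne
  have hsU : b.coord 0 U = 1 - b.coord 1 U - b.coord 2 U := by linarith [sum_coord_eq_one b U]
  have hsV : b.coord 0 V = 1 - b.coord 1 V - b.coord 2 V := by linarith [sum_coord_eq_one b V]
  have hmid (i : Fin 3) : b.coord i (midpoint ℝ U V) = (b.coord i U + b.coord i V) / 2 := by
    rw [AffineMap.map_midpoint, midpoint_eq_smul_add, smul_eq_mul, invOf_eq_inv]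
    ring
  refine isCenterOf_circumconic_of_eq ?_ ?_
  · simp only [hmid, chordCoeff, anticenterForm, circumForm, hsU, hsV, Pi.smul_apply, smul_eq_mul,
      Matrix.cons_val] at hform ⊢
    linear_combination -k / 2 * (b.coord 2 U - b.coord 2 V) * hform
  · simp only [hmid, chordCoeff, anticenterForm, circumForm, hsU, hsV, Pi.smul_apply, smul_eq_mul,
      Matrix.cons_val] at hform ⊢
    linear_combination
      k / 2 * (b.coord 1 U + b.coord 2 U - b.coord 1 V - b.coord 2 V) * hform

end Chord

theorem two_smul_sub_anticomplement (O Z : Pt) :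
    (2 : ℝ) • O - anticomplement b Z = (2 : ℝ) • Z - anticomplement b O := by
  refine b.ext_elem fun i => ?_
  rw [map_two_smul_sub, map_two_smul_sub, coord_anticomplement, coord_anticomplement]
  ring

section FourthIntersection

variable {c d : Fin 3 → ℝ} {O Z : Pt}

theorem anticomplement_center_mem (hc : ∀ i, c i ≠ 0) (hZ : IsCenterOf Z (circumconic b c))
    (hH : anticomplement b O ∈ circumconic b c) (hO : IsCenterOf O (circumconic b d))
    (hd : d ≠ 0) (hO0 : ∀ i, b.coord i O ≠ 0) : anticomplement b Z ∈ circumconic b d := by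
  rw [mem_circumconic_iff_anticenterForm_eq_zero hO hd hO0, anticenterForm_comm]
  exact anticenterForm_eq_zero_of_mem hZ hc hH

theorem eq_two_smul_sub_of_mem (hc : ∀ i, c i ≠ 0)
    (hZ : ∀ W, IsCenterOf W (circumconic b c) → W = Z)
    (hH : anticomplement b O ∈ circumconic b c) (hH0 : ∀ i, b.coord i (anticomplement b O) ≠ 0)
    (hO : IsCenterOf O (circumconic b d)) (hd : d ≠ 0) (hO0 : ∀ i, b.coord i O ≠ 0) {W : Pt}
    (hWc : W ∈ circumconic b c) (hWd : W ∈ circumconic b d) (hW : ∀ i, W ≠ b i) :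
    W = (2 : ℝ) • Z - anticomplement b O := by
  have hform : anticenterForm b (anticomplement b O) W = 0 :=
    (mem_circumconic_iff_anticenterForm_eq_zero hO hd hO0).1 hWd
  have hne : anticomplement b O ≠ W := by
    rintro rfl
    rw [anticenterForm_self] at hform
    simp [hH0] at hform
  have hchord := chordCoeff_ne_zero hH0 (coord_ne_zero_of_mem_circumconic hc hWc hW) hne
  rw [← hZ _ (isCenterOf_midpoint hH hWc hchord hform), midpoint_eq_smul_add, smul_smul,
    mul_invOf_self, one_smul, add_sub_cancel_left]

theorem fourth_intersection_circumconic (hc : ∀ i, c i ≠ 0) (hZ : IsCenterOf Z (circumconic b c))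
    (hZuniq : ∀ W, IsCenterOf W (circumconic b c) → W = Z)
    (hH : anticomplement b O ∈ circumconic b c) (hH0 : ∀ i, b.coord i (anticomplement b O) ≠ 0)
    (hO : IsCenterOf O (circumconic b d)) (hd : d ≠ 0) (hO0 : ∀ i, b.coord i O ≠ 0) :
    (2 : ℝ) • O - anticomplement b Z ∈ circumconic b c ∧
      (2 : ℝ) • O - anticomplement b Z ∈ circumconic b d ∧
      ∀ W ∈ circumconic b c, W ∈ circumconic b d →
        (∃ i, W = b i) ∨ W = (2 : ℝ) • O - anticomplement b Z := by
  have hantipode := two_smul_sub_anticomplement (b := b) O Z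
  refine ⟨hantipode ▸ hZ _ hH, hO _ (anticomplement_center_mem hc hZ hH hO hd hO0),
    fun W hWc hWd => or_iff_not_imp_left.2 fun hW => ?_⟩
  exact hantipode ▸
    eq_two_smul_sub_of_mem hc hZuniq hH hH0 hO hd hO0 hWc hWd (not_exists.1 hW)

end FourthIntersection

theorem isConic_parallel_lines {f : Pt →ᵃ[ℝ] ℝ} {U V : Pt} (hUV : f U ≠ f V) :
    IsConic {W | f W = 0 ∨ f W = 1} := by
  obtain ⟨g, a, hf⟩ := exists_eq_linear_add f
  have hg (W : Pt) : g W = g (1, 0) * W.1 + g (0, 1) * W.2 := by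
    conv_lhs => rw [show W = W.1 • ((1, 0) : Pt) + W.2 • ((0, 1) : Pt) by ext <;> simp]
    rw [map_add, map_smul, map_smul, smul_eq_mul, smul_eq_mul]
    ring
  refine ⟨![g (1, 0) ^ 2, 2 * g (1, 0) * g (0, 1), g (0, 1) ^ 2, g (1, 0) * (2 * a - 1),
    g (0, 1) * (2 * a - 1), a * (a - 1)], ?_, Set.ext fun W => ?_⟩
  · rintro ⟨h₀, -, h₂⟩
    have h₁₀ : g (1, 0) = 0 := by simpa using h₀
    have h₀₁ : g (0, 1) = 0 := by simpa using h₂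
    exact hUV (by rw [hf, hf, hg U, hg V, h₁₀, h₀₁, zero_mul, zero_mul, zero_mul, zero_mul])
  · have hfactor : f W * (f W - 1) = qval ![g (1, 0) ^ 2, 2 * g (1, 0) * g (0, 1), g (0, 1) ^ 2,
        g (1, 0) * (2 * a - 1), g (0, 1) * (2 * a - 1), a * (a - 1)] W := by
      rw [hf, hg]
      simp only [qval, Matrix.cons_val]
      ring
    rw [Set.mem_ofPred_eq, Set.mem_ofPred_eq, ← hfactor, mul_eq_zero, sub_eq_zero]

theorem isCenterOf_parallel_lines {f : Pt →ᵃ[ℝ] ℝ} {O : Pt} (hO : f O = 1 / 2) :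
    IsCenterOf O {W | f W = 0 ∨ f W = 1} := by
  intro W hW
  simp only [Set.mem_ofPred_eq, map_two_smul_sub, hO] at hW ⊢
  rcases hW with hW | hW <;> simp [hW]

-- Otherwise `O` lies midway between two pairs of parallel lines, and each of these pairs is a
-- degenerate circumconic centered at `O`.
theorem coord_anticomplement_ne_zero_of_unique {O : Pt} {S : Set Pt}
    (huniq : ∀ T : Set Pt, IsConic T → (∀ i, b i ∈ T) → IsCenterOf O T → T = S) {i j : Fin 3}
    (hij : i ≠ j) (hi : b.coord i (anticomplement b O) = 0) :
    b.coord j (anticomplement b O) ≠ 0 := by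
  intro hj
  have hlines (l : Fin 3) (hl : b.coord l (anticomplement b O) = 0) :
      {W | b.coord l W = 0 ∨ b.coord l W = 1} = S := by
    obtain ⟨m, -, hlm, -, -⟩ := exists_distinct_indices l
    rw [coord_anticomplement] at hl
    refine huniq _ (isConic_parallel_lines (U := b l) (V := b m) (by simp [b.coord_apply, hlm]))
      (fun m => ?_) (isCenterOf_parallel_lines (by linarith))
    by_cases hlm : l = m <;> simp [b.coord_apply, hlm]
  obtain ⟨k, hik, hkj⟩ := exists_third_index hij
  have hmem : AffineMap.lineMap (b j) (b k) (2 : ℝ) ∈ {W | b.coord i W = 0 ∨ b.coord i W = 1} := by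
    left
    rw [AffineMap.apply_lineMap, b.coord_apply_ne hij, b.coord_apply_ne hik,
      AffineMap.lineMap_same_apply]
  rw [hlines i hi, ← hlines j hj, Set.mem_ofPred_eq, AffineMap.apply_lineMap, b.coord_apply_eq,
    b.coord_apply_ne hkj.symm, AffineMap.lineMap_apply_ring'] at hmem
  norm_num at hmem

section Isotomcomplement

variable {P Q : Pt}

theorem isIsotomcomplement_homoth_cent {P' : Pt} (hs : circumForm b 1 P ≠ 0)
    (hP' : P' = (b.coord 1 P * b.coord 2 P / circumForm b 1 P) • b 0 +
      (b.coord 0 P * b.coord 2 P / circumForm b 1 P) • b 1 +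
      (b.coord 0 P * b.coord 1 P / circumForm b 1 P) • b 2) :
    IsIsotomcomplement b P (homoth (cent (b 0) (b 1) (b 2)) (-(1 / 2)) P') := by
  have hsum : b.coord 1 P * b.coord 2 P / circumForm b 1 P +
      b.coord 0 P * b.coord 2 P / circumForm b 1 P +
      b.coord 0 P * b.coord 1 P / circumForm b 1 P = 1 := by
    rw [← add_div, ← add_div, div_eq_one_iff_eq hs, circumForm_one]
    ring
  obtain ⟨h₀, h₁, h₂⟩ := coord_combination b hsum
  rw [← hP'] at h₀ h₁ h₂
  rw [eq_div_iff hs] at h₀ h₁ h₂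
  have hsumP := sum_coord_eq_one b P
  have hform := circumForm_one b P
  have hcoord₀ : circumForm b 1 P * (1 - b.coord 0 P') = b.coord 0 P * (1 - b.coord 0 P) := by
    linear_combination hform - h₀ + b.coord 0 P * hsumP
  have hcoord₁ : circumForm b 1 P * (1 - b.coord 1 P') = b.coord 1 P * (1 - b.coord 1 P) := by
    linear_combination hform - h₁ + b.coord 1 P * hsumP
  have hcoord₂ : circumForm b 1 P * (1 - b.coord 2 P') = b.coord 2 P * (1 - b.coord 2 P) := by
    linear_combination hform - h₂ + b.coord 2 P * hsumP
  have hcoord (i : Fin 3) :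
      circumForm b 1 P * (1 - b.coord i P') = b.coord i P * (1 - b.coord i P) := by
    fin_cases i
    exacts [hcoord₀, hcoord₁, hcoord₂]
  intro i
  rw [map_homoth_cent, sum_coord_vertex, ← hcoord]
  ring

theorem trace_sub_isotomcomplement {i j k : Fin 3} (hij : i ≠ j) (hjk : j ≠ k) (hik : i ≠ k)
    (hQ : IsIsotomcomplement b P Q) {D : Pt} (hcevian : Collinear ℝ {b i, P, D})
    (hside : Collinear ℝ {b j, b k, D}) :
    2 * circumForm b 1 P * (1 - b.coord i P) * (b.coord j D - b.coord j Q) =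
      b.coord j P * (circumForm b 1 P - b.coord k P ^ 2) := by
  have hDi : b.coord i D = 0 := by
    have h := map_mul_map_comm_of_collinear hside (b.coord i) (b.coord k) (b.coord_apply_ne hij)
      (b.coord_apply_ne hjk.symm)
    rwa [b.coord_apply_ne hik, b.coord_apply_eq, zero_mul, one_mul, eq_comm] at h
  have hDjk := map_mul_map_comm_of_collinear hcevian (b.coord j) (b.coord k)
    (b.coord_apply_ne hij.symm) (b.coord_apply_ne hik.symm)
  have hsumD := coord_add_coord_add_coord b hij hjk hik D
  have hsumP := coord_add_coord_add_coord b hij hjk hik P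
  have hDj : (1 - b.coord i P) * b.coord j D = b.coord j P := by
    linear_combination b.coord j P * hsumD - b.coord j D * hsumP - hDjk - b.coord j P * hDi
  have hsq := circumForm_one_add_sq b hik.symm hij hjk.symm P
  linear_combination 2 * circumForm b 1 P * hDj - (1 - b.coord i P) * hQ j + b.coord j P * hsq

theorem coord_anticomplement_mul_eq {i j k : Fin 3} (hij : i ≠ j) (hjk : j ≠ k) (hik : i ≠ k)
    (hQ : IsIsotomcomplement b P Q) {D O : Pt} (hcevian : Collinear ℝ {b i, P, D})
    (hside : Collinear ℝ {b j, b k, D}) (hpar : Par (midpoint ℝ (b j) (b k) - O) (D - Q)) :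
    b.coord j (anticomplement b O) * (b.coord k P * (circumForm b 1 P - b.coord j P ^ 2)) =
      b.coord k (anticomplement b O) * (b.coord j P * (circumForm b 1 P - b.coord k P ^ 2)) := by
  have hj := trace_sub_isotomcomplement hij hjk hik hQ hcevian hside
  have hk := trace_sub_isotomcomplement hik hjk.symm hij hQ hcevian
    (by rwa [Set.insert_comm])
  have hmid (l : Fin 3) (hl : b.coord l (b j) + b.coord l (b k) = 1) :
      2 * (b.coord l).linear (midpoint ℝ (b j) (b k) - O) = b.coord l (anticomplement b O) := by
    rw [← vsub_eq_sub, AffineMap.linearMap_vsub, coord_anticomplement, AffineMap.map_midpoint,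
      midpoint_eq_smul_add, hl, vsub_eq_sub, smul_eq_mul, invOf_eq_inv]
    ring
  have hdiff (l : Fin 3) : (b.coord l).linear (D - Q) = b.coord l D - b.coord l Q :=
    (b.coord l).linearMap_vsub D Q
  have hcross := hpar.map_mul_map_comm (b.coord j).linear (b.coord k).linear
  have hmj := hmid j (by simp [b.coord_apply, hjk])
  have hmk := hmid k (by simp [b.coord_apply, hjk.symm])
  rw [← hmj, ← hmk, ← hj, ← hk, ← hdiff, ← hdiff]
  linear_combination 4 * circumForm b 1 P * (1 - b.coord i P) * hcross

theorem exists_coord_mul_eq_of_proportional {H : Pt} (hP : ∀ i, b.coord i P ≠ 0)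
    (h₀₁ : b.coord 0 H * (b.coord 1 P * (circumForm b 1 P - b.coord 0 P ^ 2)) =
      b.coord 1 H * (b.coord 0 P * (circumForm b 1 P - b.coord 1 P ^ 2)))
    (h₂₀ : b.coord 2 H * (b.coord 0 P * (circumForm b 1 P - b.coord 2 P ^ 2)) =
      b.coord 0 H * (b.coord 2 P * (circumForm b 1 P - b.coord 0 P ^ 2))) :
    ∃ r : ℝ, ∀ i, b.coord i H * (circumForm b 1 P - b.coord i P ^ 2) = r * b.coord i P := by
  have hP0 := hP 0
  have h₀ : b.coord 0 H * (circumForm b 1 P - b.coord 0 P ^ 2) =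
      b.coord 0 H * (circumForm b 1 P - b.coord 0 P ^ 2) / b.coord 0 P * b.coord 0 P := by
    field_simp
  have h₁ : b.coord 1 H * (circumForm b 1 P - b.coord 1 P ^ 2) =
      b.coord 0 H * (circumForm b 1 P - b.coord 0 P ^ 2) / b.coord 0 P * b.coord 1 P := by
    field_simp
    linear_combination -h₀₁
  have h₂ : b.coord 2 H * (circumForm b 1 P - b.coord 2 P ^ 2) =
      b.coord 0 H * (circumForm b 1 P - b.coord 0 P ^ 2) / b.coord 0 P * b.coord 2 P := by
    field_simp
    linear_combination h₂₀
  exact ⟨_, fun i => by fin_cases i; exacts [h₀, h₁, h₂]⟩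

theorem ne_zero_of_coord_mul_eq {H : Pt} {r : ℝ}
    (hP1 : ∀ i, b.coord i P ≠ 1) (hinj : Function.Injective fun i => b.coord i P)
    (hH : ∀ i j, i ≠ j → b.coord i H = 0 → b.coord j H ≠ 0)
    (hr : ∀ i, b.coord i H * (circumForm b 1 P - b.coord i P ^ 2) = r * b.coord i P) : r ≠ 0 := by
  rintro rfl
  have hsq (i j : Fin 3) (hij : i ≠ j) (hi : circumForm b 1 P - b.coord i P ^ 2 = 0) :
      circumForm b 1 P - b.coord j P ^ 2 ≠ 0 := by
    intro hj
    have hpm : (b.coord i P - b.coord j P) * (b.coord i P + b.coord j P) = 0 := by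
      linear_combination hj - hi
    rcases mul_eq_zero.1 hpm with h | h
    · exact hij (hinj (sub_eq_zero.1 h))
    · obtain ⟨k, hik, hkj⟩ := exists_third_index hij
      exact hP1 k (by linarith [coord_add_coord_add_coord b hik hkj hij P])
  simp only [zero_mul, mul_eq_zero] at hr
  rcases hr 0 with h₀ | h₀
  · exact hsq 1 2 (by decide) ((hr 1).resolve_left (hH 0 1 (by decide) h₀))
      ((hr 2).resolve_left (hH 0 2 (by decide) h₀))
  · exact hH 1 2 (by decide) ((hr 1).resolve_right (hsq 0 1 (by decide) h₀))
      ((hr 2).resolve_right (hsq 0 2 (by decide) h₀))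

theorem sum_coeff_mul_eq_zero_of_mem {c : Fin 3 → ℝ} (hQ : IsIsotomcomplement b P Q)
    (hPc : P ∈ circumconic b c) (hQc : Q ∈ circumconic b c) :
    c 0 * (circumForm b 1 P - b.coord 0 P ^ 2) * (b.coord 1 P * b.coord 2 P) +
      c 1 * (circumForm b 1 P - b.coord 1 P ^ 2) * (b.coord 2 P * b.coord 0 P) +
      c 2 * (circumForm b 1 P - b.coord 2 P ^ 2) * (b.coord 0 P * b.coord 1 P) = 0 := by
  have hsq₀ := circumForm_one_add_sq b (show (0 : Fin 3) ≠ 1 by decide)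
    (show (1 : Fin 3) ≠ 2 by decide) (by decide) P
  have hsq₁ := circumForm_one_add_sq b (show (1 : Fin 3) ≠ 2 by decide)
    (show (2 : Fin 3) ≠ 0 by decide) (by decide) P
  have hsq₂ := circumForm_one_add_sq b (show (2 : Fin 3) ≠ 0 by decide)
    (show (0 : Fin 3) ≠ 1 by decide) (by decide) P
  have h₁₂ := congrArg₂ (· * ·) (hQ 1) (hQ 2)
  have h₂₀ := congrArg₂ (· * ·) (hQ 2) (hQ 0)
  have h₀₁ := congrArg₂ (· * ·) (hQ 0) (hQ 1)
  simp only [circumconic, Set.mem_ofPred_eq, circumForm.eq_def b c] at hPc hQc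
  linear_combination 2 * circumForm b 1 P * hPc - 4 * circumForm b 1 P ^ 2 * hQc
    - c 0 * (b.coord 1 P * b.coord 2 P) * hsq₀ + c 0 * h₁₂
    - c 1 * (b.coord 2 P * b.coord 0 P) * hsq₁ + c 1 * h₂₀
    - c 2 * (b.coord 0 P * b.coord 1 P) * hsq₂ + c 2 * h₀₁

theorem isGeneralizedOrthocenter_anticomplement {E F O : Pt} {S : Set Pt}
    (hP : ∀ i, b.coord i P ≠ 0) (hP1 : ∀ i, b.coord i P ≠ 1)
    (hinj : Function.Injective fun i => b.coord i P) (hQ : IsIsotomcomplement b P Q)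
    (huniq : ∀ T : Set Pt, IsConic T → (∀ i, b i ∈ T) → IsCenterOf O T → T = S)
    (hE : Collinear ℝ {b 1, P, E} ∧ Collinear ℝ {b 0, b 2, E})
    (hF : Collinear ℝ {b 2, P, F} ∧ Collinear ℝ {b 0, b 1, F})
    (hOE : Par (midpoint ℝ (b 2) (b 0) - O) (E - Q))
    (hOF : Par (midpoint ℝ (b 0) (b 1) - O) (F - Q)) :
    IsGeneralizedOrthocenter b P (anticomplement b O) := by
  have h₀₁ := coord_anticomplement_mul_eq (by decide) (by decide) (by decide) hQ hF.1 hF.2 hOF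
  have h₂₀ := coord_anticomplement_mul_eq (by decide) (by decide) (by decide) hQ hE.1
    (by rw [Set.insert_comm]; exact hE.2) hOE
  have hne (i j : Fin 3) : i ≠ j → b.coord i (anticomplement b O) = 0 →
      b.coord j (anticomplement b O) ≠ 0 := coord_anticomplement_ne_zero_of_unique huniq
  obtain ⟨r, hr⟩ := exists_coord_mul_eq_of_proportional hP h₀₁ h₂₀
  exact ⟨r, ne_zero_of_coord_mul_eq hP1 hinj hne hr, hr⟩

namespace IsGeneralizedOrthocenter

variable {H : Pt}

theorem coord_mul_ne_zero (hH : IsGeneralizedOrthocenter b P H) (hP : ∀ i, b.coord i P ≠ 0)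
    (i : Fin 3) : b.coord i H * (circumForm b 1 P - b.coord i P ^ 2) ≠ 0 := by
  obtain ⟨r, hr0, hr⟩ := hH
  exact (hr i).trans_ne (mul_ne_zero hr0 (hP i))

theorem coord_ne_zero (hH : IsGeneralizedOrthocenter b P H) (hP : ∀ i, b.coord i P ≠ 0)
    (i : Fin 3) : b.coord i H ≠ 0 :=
  left_ne_zero_of_mul (hH.coord_mul_ne_zero hP i)

theorem coord_ne_one (hH : IsGeneralizedOrthocenter b P H) (hP : ∀ i, b.coord i P ≠ 0)
    (hP1 : ∀ i, b.coord i P ≠ 1) (i : Fin 3) : b.coord i H ≠ 1 := by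
  intro hH1
  obtain ⟨r, hr0, hr⟩ := hH
  obtain ⟨j, k, hij, hjk, hik⟩ := exists_distinct_indices i
  have hsumH := coord_add_coord_add_coord b hij hjk hik H
  have hsumP := coord_add_coord_add_coord b hij hjk hik P
  have hsq := circumForm_one_add_sq b hij hjk hik P
  have hid : b.coord j P * (circumForm b 1 P - b.coord k P ^ 2) +
      b.coord k P * (circumForm b 1 P - b.coord j P ^ 2) = (1 - b.coord i P) ^ 2 * b.coord i P := by
    rw [eq_sub_of_add_eq hsq, show b.coord i P = 1 - b.coord j P - b.coord k P by linarith]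
    ring
  have hprod : r * ((1 - b.coord i P) ^ 2 * b.coord i P) = 0 := by
    rw [← hid]
    linear_combination -(circumForm b 1 P - b.coord k P ^ 2) * hr j
      - (circumForm b 1 P - b.coord j P ^ 2) * hr k
      + (circumForm b 1 P - b.coord j P ^ 2) * (circumForm b 1 P - b.coord k P ^ 2)
        * (hsumH - hH1)
  simp [hr0, hP, sub_eq_zero, (hP1 i).symm] at hprod

theorem mem_circumconic {c : Fin 3 → ℝ} (hH : IsGeneralizedOrthocenter b P H)
    (hP : ∀ i, b.coord i P ≠ 0) (hQ : IsIsotomcomplement b P Q) (hPc : P ∈ circumconic b c)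
    (hQc : Q ∈ circumconic b c) : H ∈ circumconic b c := by
  have hPQ := sum_coeff_mul_eq_zero_of_mem hQ hPc hQc
  have hden (i : Fin 3) := right_ne_zero_of_mul (hH.coord_mul_ne_zero hP i)
  obtain ⟨r, -, hr⟩ := hH
  have h₁₂ := congrArg₂ (· * ·) (hr 1) (hr 2)
  have h₂₀ := congrArg₂ (· * ·) (hr 2) (hr 0)
  have h₀₁ := congrArg₂ (· * ·) (hr 0) (hr 1)
  have hprod : circumForm b c H * ((circumForm b 1 P - b.coord 0 P ^ 2) *
      (circumForm b 1 P - b.coord 1 P ^ 2) * (circumForm b 1 P - b.coord 2 P ^ 2)) = 0 := by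
    rw [circumForm.eq_def b c]
    linear_combination c 0 * (circumForm b 1 P - b.coord 0 P ^ 2) * h₁₂
      + c 1 * (circumForm b 1 P - b.coord 1 P ^ 2) * h₂₀
      + c 2 * (circumForm b 1 P - b.coord 2 P ^ 2) * h₀₁ + r ^ 2 * hPQ
  simpa [circumconic, hden] using hprod

theorem coord_complement_ne_zero {O : Pt}
    (hO : IsGeneralizedOrthocenter b P (anticomplement b O)) (hP : ∀ i, b.coord i P ≠ 0)
    (hP1 : ∀ i, b.coord i P ≠ 1) (i : Fin 3) : b.coord i O ≠ 0 := by
  have hne := hO.coord_ne_one hP hP1 i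
  rw [coord_anticomplement] at hne
  exact fun h => hne (by rw [h, mul_zero, sub_zero])

end IsGeneralizedOrthocenter

theorem IsIsotomcomplement.coord_ne_zero (hQ : IsIsotomcomplement b P Q)
    (hP : ∀ i, b.coord i P ≠ 0) (hP1 : ∀ i, b.coord i P ≠ 1) (i : Fin 3) : b.coord i Q ≠ 0 := by
  have h : 2 * circumForm b 1 P * b.coord i Q ≠ 0 := by
    rw [hQ i]
    exact mul_ne_zero (hP i) (sub_ne_zero.2 (hP1 i).symm)
  exact right_ne_zero_of_mul h

theorem chordCoeff_isotomcomplement_ne_zero (hP : ∀ i, b.coord i P ≠ 0)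
    (hinj : Function.Injective fun i => b.coord i P) (hQ : IsIsotomcomplement b P Q)
    (hQ0 : ∀ i, b.coord i Q ≠ 0) (i : Fin 3) : chordCoeff b P Q i ≠ 0 := by
  have hne (i j : Fin 3) (hij : i ≠ j) :
      b.coord i P * b.coord j Q - b.coord j P * b.coord i Q ≠ 0 := by
    intro h
    have hprod : b.coord i P * b.coord j P * (b.coord i P - b.coord j P) = 0 := by
      linear_combination 2 * circumForm b 1 P * h - b.coord i P * hQ j + b.coord j P * hQ i
    simp [hP, sub_eq_zero, hinj.ne hij] at hprod
  fin_cases i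
  · exact mul_ne_zero (mul_ne_zero (hP 0) (hQ0 0)) (hne 2 1 (by decide))
  · exact mul_ne_zero (mul_ne_zero (hP 1) (hQ0 1)) (hne 0 2 (by decide))
  · exact mul_ne_zero (mul_ne_zero (hP 2) (hQ0 2)) (hne 1 0 (by decide))

theorem coeff_ne_zero_of_mem {c : Fin 3 → ℝ} (hP : ∀ i, b.coord i P ≠ 0)
    (hP1 : ∀ i, b.coord i P ≠ 1) (hinj : Function.Injective fun i => b.coord i P)
    (hQ : IsIsotomcomplement b P Q) (hc : c ≠ 0) (hPc : P ∈ circumconic b c)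
    (hQc : Q ∈ circumconic b c) (i : Fin 3) : c i ≠ 0 := by
  have hchord := chordCoeff_isotomcomplement_ne_zero hP hinj hQ (hQ.coord_ne_zero hP hP1)
  obtain ⟨k, rfl⟩ := exists_eq_smul_chordCoeff hPc hQc (Function.ne_iff.2 ⟨i, hchord i⟩)
  exact mul_ne_zero (left_ne_zero_of_smul hc) (hchord i)

end Isotomcomplement

end Triangle

theorem Ztilde_fourth_intersection
    (A B C P P' Q Q' D E F D₃ E₃ F₃ : Pt) (x y z : ℝ)
    (hABC : AffineIndependent ℝ ![A, B, C])
    (hsum : x + y + z = 1)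
    (hPco : P = x • A + y • B + z • C)
    (hx0 : x ≠ 0) (hy0 : y ≠ 0) (hz0 : z ≠ 0)
    (hx1 : x ≠ 1) (hy1 : y ≠ 1) (hz1 : z ≠ 1)
    (hst : x * y + y * z + z * x ≠ 0)
    (hP' : P' = (y * z / (x * y + y * z + z * x)) • A
        + (x * z / (x * y + y * z + z * x)) • B
        + (x * y / (x * y + y * z + z * x)) • C)
    (hQ : Q = homoth (cent A B C) (-(1 / 2)) P')
    (hQ' : Q' = homoth (cent A B C) (-(1 / 2)) P)
    (hD : Collinear ℝ {A, P, D} ∧ Collinear ℝ {B, C, D})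
    (hE : Collinear ℝ {B, P, E} ∧ Collinear ℝ {A, C, E})
    (hF : Collinear ℝ {C, P, F} ∧ Collinear ℝ {A, B, F})
    (hD₃ : Collinear ℝ {A, P', D₃} ∧ Collinear ℝ {B, C, D₃})
    (hE₃ : Collinear ℝ {B, P', E₃} ∧ Collinear ℝ {A, C, E₃})
    (hF₃ : Collinear ℝ {C, P', F₃} ∧ Collinear ℝ {A, B, F₃})
    (hxy : x ≠ y) (hyz : y ≠ z) (hxz : x ≠ z)
    (O H : Pt)
    (hO : Par (midpoint ℝ B C - O) (D - Q) ∧ Par (midpoint ℝ C A - O) (E - Q) ∧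
          Par (midpoint ℝ A B - O) (F - Q))
    (hH : Par (H - A) (D - Q) ∧ Par (H - B) (E - Q) ∧ Par (H - C) (F - Q))
    (CO : Set Pt)
    (hCO : IsConic CO) (hACO : A ∈ CO) (hBCO : B ∈ CO) (hCCO : C ∈ CO)
    (hOcen : IsCenterOf O CO)
    (hCOuniq : ∀ S : Set Pt, IsConic S → A ∈ S → B ∈ S → C ∈ S → IsCenterOf O S → S = CO)
    (CP : Set Pt) (Z : Pt)
    (hCPc : IsConic CP) (hACP : A ∈ CP) (hBCP : B ∈ CP) (hCCP : C ∈ CP)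
    (hPCP : P ∈ CP) (hQCP : Q ∈ CP)
    (hCPuniq : ∀ S : Set Pt, IsConic S → A ∈ S → B ∈ S → C ∈ S → P ∈ S → Q ∈ S → S = CP)
    (hZ : IsCenterOf Z CP) (hZuniq : ∀ W : Pt, IsCenterOf W CP → W = Z)
    (Zt : Pt) (hZt : Zt = (2 : ℝ) • O - homoth (cent A B C) (-2) Z) :
    Zt ∈ CP ∧ Zt ∈ CO ∧
    (∀ W : Pt, W ∈ CP → W ∈ CO → W = A ∨ W = B ∨ W = C ∨ W = Zt) := by
  obtain ⟨b, rfl, rfl, rfl⟩ := exists_affineBasis_of_affineIndependent hABC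
  obtain ⟨rfl, rfl, rfl⟩ : b.coord 0 P = x ∧ b.coord 1 P = y ∧ b.coord 2 P = z :=
    hPco ▸ coord_combination b hsum
  rw [← circumForm_one] at hst hP'
  have hP0 : ∀ i, b.coord i P ≠ 0 := by simp [Fin.forall_fin_succ, hx0, hy0, hz0]
  have hP1 : ∀ i, b.coord i P ≠ 1 := by simp [Fin.forall_fin_succ, hx1, hy1, hz1]
  have hinj : Function.Injective fun i => b.coord i P := by
    simp [Function.Injective, Fin.forall_fin_succ, hxy, hyz, hxz, hxy.symm, hyz.symm, hxz.symm]
  have hPQ : IsIsotomcomplement b P Q := hQ ▸ isIsotomcomplement_homoth_cent hst hP'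
  obtain ⟨c, hc, rfl⟩ := hCPc.exists_eq_circumconic (b := b)
    (by simp [Fin.forall_fin_succ, hACP, hBCP, hCCP])
  obtain ⟨d, hd, rfl⟩ := hCO.exists_eq_circumconic (b := b)
    (by simp [Fin.forall_fin_succ, hACO, hBCO, hCCO])
  have hH : IsGeneralizedOrthocenter b P (anticomplement b O) :=
    isGeneralizedOrthocenter_anticomplement hP0 hP1 hinj hPQ
      (fun T hT hb => hCOuniq T hT (hb 0) (hb 1) (hb 2)) hE hF hO.2.1 hO.2.2
  obtain ⟨hZtc, hZtd, hW⟩ := fourth_intersection_circumconic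
    (coeff_ne_zero_of_mem hP0 hP1 hinj hPQ hc hPCP hQCP) hZ hZuniq
    (hH.mem_circumconic hP0 hPQ hPCP hQCP) (hH.coord_ne_zero hP0) hOcen hd
    (hH.coord_complement_ne_zero hP0 hP1)
  refine ⟨hZt ▸ hZtc, hZt ▸ hZtd, fun W hWc hWd => ?_⟩
  simpa [Fin.exists_fin_succ, or_assoc, hZt, anticomplement] using hW W hWc hWd
end
end

section
/- Let C̄_A be the conic with homogeneous barycentric equation xy + xz + yz = x² with respect to ABC. Then C̄_A passes through B, C, E₀, F₀, is tangent to the line K⁻¹(AC) at B and tangent to the line K⁻¹(AB) at C, and the locus of points P for which the generalized orthocenter H of P equals A is exactly C̄_A ∖ {B, C, E₀, F₀}: every admissible point P with H = A lies on C̄_A, and conversely every point of C̄_A other than B, C, E₀, F₀ lies on no extended side of ABC or of K⁻¹(ABC), has a well-defined generalized orthocenter, and that generalized orthocenter equals A. -/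
noncomputable section

/-- `P` does not lie on any extended side of `ABC` or of its anticomplementary triangle. -/
def Admissible (A B C P : Pt) : Prop :=
  ∃ x y z : ℝ, x + y + z = 1 ∧ P = x • A + y • B + z • C ∧
    x ≠ 0 ∧ y ≠ 0 ∧ z ≠ 0 ∧ x ≠ 1 ∧ y ≠ 1 ∧ z ≠ 1

/-- `H` is a generalized orthocenter of the admissible point `P` with respect to `ABC`. -/
def IsGenOrtho (A B C P H : Pt) : Prop :=
  ∃ (x y z : ℝ) (P' Q D E F : Pt),
    x + y + z = 1 ∧ P = x • A + y • B + z • C ∧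
    x ≠ 0 ∧ y ≠ 0 ∧ z ≠ 0 ∧ x ≠ 1 ∧ y ≠ 1 ∧ z ≠ 1 ∧
    x * y + y * z + z * x ≠ 0 ∧
    P' = (y * z / (x * y + y * z + z * x)) • A
      + (x * z / (x * y + y * z + z * x)) • B
      + (x * y / (x * y + y * z + z * x)) • C ∧
    Q = homoth (cent A B C) (-(1 / 2)) P' ∧
    Collinear ℝ {A, P, D} ∧ Collinear ℝ {B, C, D} ∧
    Collinear ℝ {B, P, E} ∧ Collinear ℝ {A, C, E} ∧
    Collinear ℝ {C, P, F} ∧ Collinear ℝ {A, B, F} ∧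
    Par (H - A) (D - Q) ∧ Par (H - B) (E - Q) ∧ Par (H - C) (F - Q)

/-!
Write `x, y, z` for the barycentric coordinates of `P`, normalised by `x + y + z = 1`, and
`σ = xy + xz + yz`. The trace `E` of `P` on `CA` has `z`-coordinate `z / (1 - y)`, and the
isotomcomplement `Q` has `z`-coordinate `z (1 - z) / (2σ)`. Hence `BA ∥ QE` says that
`(1 - y) (1 - z) = 2σ`; this is symmetric in `y` and `z`, so `CA ∥ QF` gives the same condition.
Since `(1 - y) (1 - z) = x² + σ`, the condition is the equation `σ = x²` of the conic.

The same identity puts that equation in the bitangent form `(1 - y) (1 - z) = 2x²`: the conic is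
tangent to the lines `y = 1` and `z = 1`, which are `K⁻¹(AC)` and `K⁻¹(AB)`, at the points where
they meet the line `x = 0`, which are `B` and `C`.
-/

section FinThree

variable {i j l : Fin 3}

theorem forall_fin_three {p : Fin 3 → Prop} : (∀ i, p i) ↔ p 0 ∧ p 1 ∧ p 2 := by
  simp [Fin.forall_fin_succ]

theorem exists_ne_and_ne (i j : Fin 3) : ∃ l, i ≠ l ∧ j ≠ l := by
  decide +revert

theorem univ_eq_of_distinct (hij : i ≠ j) (hil : i ≠ l) (hjl : j ≠ l) :
    (Finset.univ : Finset (Fin 3)) = {i, j, l} := by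
  decide +revert

end FinThree

section Coordinates

variable {k V P ι : Type*} [Field k] [AddCommGroup V] [Module k V] [AddTorsor V P]

theorem exists_affineBasis_of_affineIndependent_s19 (hV : Module.finrank k V = 2) {p₀ p₁ p₂ : P}
    (h : AffineIndependent k ![p₀, p₁, p₂]) :
    ∃ b : AffineBasis (Fin 3) k P, p₀ = b 0 ∧ p₁ = b 1 ∧ p₂ = b 2 := by
  have : FiniteDimensional k V := Module.finite_of_finrank_eq_succ hV
  have hspan : affineSpan k (Set.range ![p₀, p₁, p₂]) = ⊤ :=
    h.affineSpan_eq_top_iff_card_eq_finrank_add_one.2 (by simp [hV])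
  exact ⟨⟨![p₀, p₁, p₂], h, hspan⟩, rfl, rfl, rfl⟩

theorem collinear_iff_exists_lineMap_eq {p q r : P} (h : p ≠ q) :
    Collinear k {p, q, r} ↔ ∃ t : k, AffineMap.lineMap p q t = r := by
  rw [← mem_affineSpan_pair_iff_exists_lineMap_eq]
  refine ⟨fun hc => hc.mem_affineSpan_of_mem_of_ne (by simp) (by simp) (by simp) h, fun hr => ?_⟩
  have hperm : ({p, q, r} : Set P) = {r, p, q} := by grind
  exact hperm ▸ collinear_insert_of_mem_affineSpan_pair hr

theorem coord_sum_smul [Fintype ι] (b : AffineBasis ι k V) {w : ι → k} (hw : ∑ i, w i = 1)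
    (i : ι) : b.coord i (∑ j, w j • b j) = w i := by
  rw [← Finset.univ.affineCombination_eq_linear_combination _ w hw]
  exact b.coord_apply_combination_of_mem (Finset.mem_univ i) hw

theorem weights_iff_eq_coord (b : AffineBasis (Fin 3) k V) (p : V) {x y z : k} :
    (x + y + z = 1 ∧ p = x • b 0 + y • b 1 + z • b 2) ↔
      b.coord 0 p = x ∧ b.coord 1 p = y ∧ b.coord 2 p = z := by
  constructor
  · rintro ⟨hs, rfl⟩
    have hcoord := coord_sum_smul b (w := ![x, y, z]) (by simpa [Fin.sum_univ_three] using hs)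
    simp only [Fin.sum_univ_three] at hcoord
    exact ⟨hcoord 0, hcoord 1, hcoord 2⟩
  · rintro ⟨rfl, rfl, rfl⟩
    rw [← Fin.sum_univ_three fun i => b.coord i p, ← Fin.sum_univ_three fun i => b.coord i p • b i]
    exact ⟨b.sum_coord_apply_eq_one p, (b.linear_combination_coord_eq_self p).symm⟩

theorem exists_weights_iff (b : AffineBasis (Fin 3) k V) (p : V) (R : k → k → k → Prop) :
    (∃ x y z : k, x + y + z = 1 ∧ p = x • b 0 + y • b 1 + z • b 2 ∧ R x y z) ↔
      R (b.coord 0 p) (b.coord 1 p) (b.coord 2 p) := by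
  simp only [← and_assoc, weights_iff_eq_coord]
  simp

/-- The trace of `p` on the face opposite to the vertex `b i`: the point where the line through
`b i` and `p` meets the hyperplane `b.coord i = 0`. It is `b i` (junk) if `b.coord i p = 1`. -/
def cevianTrace (b : AffineBasis ι k P) (i : ι) (p : P) : P :=
  AffineMap.lineMap (b i) p (1 - b.coord i p)⁻¹

theorem coord_cevianTrace_self (b : AffineBasis ι k P) {i : ι} {p : P} (h : b.coord i p ≠ 1) :
    b.coord i (cevianTrace b i p) = 0 := by
  have h' : 1 - b.coord i p ≠ 0 := sub_ne_zero.2 h.symm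
  rw [cevianTrace, AffineMap.apply_lineMap, AffineMap.lineMap_apply_ring', b.coord_apply_eq]
  field_simp
  ring

theorem coord_cevianTrace_of_ne (b : AffineBasis ι k P) {i j : ι} (hij : i ≠ j) (p : P) :
    b.coord j (cevianTrace b i p) = b.coord j p / (1 - b.coord i p) := by
  rw [cevianTrace, AffineMap.apply_lineMap, AffineMap.lineMap_apply_ring',
    b.coord_apply_ne hij.symm]
  ring

variable (b : AffineBasis (Fin 3) k P) {i j l : Fin 3}

theorem sum_coord_of_distinct (hij : i ≠ j) (hil : i ≠ l) (hjl : j ≠ l) (p : P) :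
    b.coord i p + b.coord j p + b.coord l p = 1 := by
  rw [← b.sum_coord_apply_eq_one p, univ_eq_of_distinct hij hil hjl]
  simp [hij, hil, hjl, add_assoc]

theorem eq_of_coord_eq_of_ne {p q : P} (hij : i ≠ j) (hi : b.coord i p = b.coord i q)
    (hj : b.coord j p = b.coord j q) : p = q := by
  refine b.ext_elem fun l => ?_
  rcases eq_or_ne i l with rfl | hil
  · exact hi
  rcases eq_or_ne j l with rfl | hjl
  · exact hj
  linear_combination sum_coord_of_distinct b hij hil hjl p -
    sum_coord_of_distinct b hij hil hjl q - hi - hj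

theorem collinear_vertices_iff (hij : i ≠ j) (hil : i ≠ l) (hjl : j ≠ l) (p : P) :
    Collinear k {b j, b l, p} ↔ b.coord i p = 0 := by
  rw [collinear_iff_exists_lineMap_eq (b.ind.injective.ne hjl)]
  constructor
  · rintro ⟨t, rfl⟩
    simp [AffineMap.apply_lineMap, hij, hil]
  · refine fun hp => ⟨b.coord l p, eq_of_coord_eq_of_ne b hil ?_ ?_⟩
    · simp [AffineMap.apply_lineMap, hij, hil, hp]
    · simp [AffineMap.apply_lineMap, AffineMap.lineMap_apply_ring', hjl.symm]

theorem eq_cevianTrace_iff (hij : i ≠ j) (hil : i ≠ l) (hjl : j ≠ l) {p q : P}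
    (h : b.coord i p ≠ 1) :
    q = cevianTrace b i p ↔ Collinear k {b i, p, q} ∧ Collinear k {b j, b l, q} := by
  have hne : b i ≠ p := by
    rintro rfl
    exact h (b.coord_apply_eq i)
  rw [collinear_iff_exists_lineMap_eq hne, collinear_vertices_iff b hij hil hjl]
  constructor
  · rintro rfl
    exact ⟨⟨_, rfl⟩, coord_cevianTrace_self b h⟩
  · rintro ⟨⟨t, rfl⟩, ht⟩
    rw [AffineMap.apply_lineMap, AffineMap.lineMap_apply_ring', b.coord_apply_eq] at ht
    rw [cevianTrace, eq_inv_of_mul_eq_one_left (b := 1 - b.coord i p) (a := t)]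
    linear_combination -ht

/-- The second elementary symmetric function `xy + yz + zx` of the barycentric coordinates of a
point, which is the common denominator of the coordinates of its isotomic conjugate. -/
def coordPairSum (p : P) : k :=
  b.coord 0 p * b.coord 1 p + b.coord 1 p * b.coord 2 p + b.coord 2 p * b.coord 0 p

theorem coordPairSum_eq_of_distinct (hij : i ≠ j) (hil : i ≠ l) (hjl : j ≠ l) (p : P) :
    coordPairSum b p =
      b.coord i p * b.coord j p + b.coord i p * b.coord l p + b.coord j p * b.coord l p := by
  unfold coordPairSum
  fin_cases i <;> fin_cases j <;> fin_cases l <;> simp at hij hil hjl ⊢ <;> ring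

theorem one_sub_coord_mul_one_sub_coord (hij : i ≠ j) (hil : i ≠ l) (hjl : j ≠ l) (p : P) :
    (1 - b.coord j p) * (1 - b.coord l p) = b.coord i p ^ 2 + coordPairSum b p := by
  rw [coordPairSum_eq_of_distinct b hij hil hjl]
  linear_combination (-b.coord i p - 1) * sum_coord_of_distinct b hij hil hjl p

end Coordinates

theorem midpoint_eq_add_div_two {k : Type*} [Field k] [Invertible (2 : k)] (x y : k) :
    midpoint k x y = (x + y) / 2 := by
  rw [midpoint_eq_smul_add, smul_eq_mul, invOf_eq_inv]
  ring

section Bitangent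

variable {f g h : Pt →ᵃ[ℝ] ℝ} {r : ℝ}

theorem affineMap_apply_eq (f : Pt →ᵃ[ℝ] ℝ) (p : Pt) :
    f p = f.linear (1, 0) * p.1 + f.linear (0, 1) * p.2 + f 0 := by
  have hp : p = p.1 • ((1, 0) : Pt) + p.2 • ((0, 1) : Pt) := by simp
  rw [congrFun f.decomp p, Pi.add_apply]
  conv_lhs => rw [hp, map_add, map_smul, map_smul]
  simp [mul_comm]

/-- Coefficients, in the sense of `qval`, of the polynomial `f g - r h²`. For `r ≠ 0` its zero
locus is the conic tangent to the lines `f = 0` and `g = 0` where they meet the line `h = 0`. -/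
def bitangentCoeff (f g h : Pt →ᵃ[ℝ] ℝ) (r : ℝ) : Fin 6 → ℝ :=
  let fx := f.linear (1, 0)
  let fy := f.linear (0, 1)
  let gx := g.linear (1, 0)
  let gy := g.linear (0, 1)
  let hx := h.linear (1, 0)
  let hy := h.linear (0, 1)
  ![fx * gx - r * hx ^ 2, fx * gy + fy * gx - 2 * r * hx * hy, fy * gy - r * hy ^ 2,
    fx * g 0 + f 0 * gx - 2 * r * hx * h 0, fy * g 0 + f 0 * gy - 2 * r * hy * h 0,
    f 0 * g 0 - r * h 0 ^ 2]

theorem bitangentCoeff_comm (f g h : Pt →ᵃ[ℝ] ℝ) (r : ℝ) :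
    bitangentCoeff f g h r = bitangentCoeff g f h r := by
  ext m
  fin_cases m <;> simp [bitangentCoeff] <;> ring

theorem qval_bitangentCoeff (f g h : Pt →ᵃ[ℝ] ℝ) (r : ℝ) (p : Pt) :
    qval (bitangentCoeff f g h r) p = f p * g p - r * h p ^ 2 := by
  rw [affineMap_apply_eq f p, affineMap_apply_eq g p, affineMap_apply_eq h p]
  simp only [qval, bitangentCoeff, Matrix.cons_val]
  ring

theorem qgrad_bitangentCoeff (f g h : Pt →ᵃ[ℝ] ℝ) (r : ℝ) (p q : Pt) :
    (qgrad (bitangentCoeff f g h r) p).1 * (q.1 - p.1) +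
        (qgrad (bitangentCoeff f g h r) p).2 * (q.2 - p.2) =
      g p * (f q - f p) + f p * (g q - g p) - 2 * r * h p * (h q - h p) := by
  rw [affineMap_apply_eq f p, affineMap_apply_eq g p, affineMap_apply_eq h p,
    affineMap_apply_eq f q, affineMap_apply_eq g q, affineMap_apply_eq h q]
  simp only [qgrad, bitangentCoeff, Matrix.cons_val]
  ring

theorem isTangentLineAt_bitangentCoeff {p q : Pt} (hf : f p = 0) (hg : g p ≠ 0) (hh : h p = 0)
    (hq : f q ≠ 0) : IsTangentLineAt (bitangentCoeff f g h r) {q | f q = 0} p := by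
  have hgrad (q : Pt) : (qgrad (bitangentCoeff f g h r) p).1 * (q.1 - p.1) +
      (qgrad (bitangentCoeff f g h r) p).2 * (q.2 - p.2) = g p * f q := by
    rw [qgrad_bitangentCoeff, hf, hh]
    ring
  refine ⟨by simp [qval_bitangentCoeff, hf, hh], fun hzero => ?_, ?_⟩
  · have hgq : g p * f q = 0 := by simpa [hzero] using (hgrad q).symm
    exact mul_ne_zero hg hq hgq
  · simp only [hgrad, mul_eq_zero, hg, false_or]

theorem qval_midpoint_of_quadratic_eq_zero {c : Fin 6 → ℝ} (h₀ : c 0 = 0) (h₁ : c 1 = 0)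
    (h₂ : c 2 = 0) (p q : Pt) : qval c (midpoint ℝ p q) = (qval c p + qval c q) / 2 := by
  simp only [qval, h₀, h₁, h₂, midpoint_eq_smul_add, Prod.smul_fst, Prod.smul_snd, Prod.fst_add,
    Prod.snd_add, smul_eq_mul, invOf_eq_inv]
  ring

end Bitangent

section Plane

variable (b : AffineBasis (Fin 3) ℝ Pt) {i j l : Fin 3}

theorem homoth_eq_lineMap (Z X : Pt) (r : ℝ) : homoth Z r X = AffineMap.lineMap Z X r := by
  simp [homoth, AffineMap.lineMap_apply, add_comm]

theorem lineThru_eq_range_lineMap (X Y : Pt) :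
    lineThru X Y = Set.range (AffineMap.lineMap (k := ℝ) X Y) := by
  ext p
  simp [lineThru, AffineMap.lineMap_apply, add_comm, eq_comm]

theorem coord_cent (i : Fin 3) : b.coord i (cent (b 0) (b 1) (b 2)) = 3⁻¹ := by
  have h := coord_sum_smul b (w := fun _ => (3⁻¹ : ℝ)) (by simp) i
  rwa [← Finset.smul_sum, Fin.sum_univ_three] at h

theorem coord_homoth_cent (r : ℝ) (X : Pt) (i : Fin 3) :
    b.coord i (homoth (cent (b 0) (b 1) (b 2)) r X) = (1 - r) / 3 + r * b.coord i X := by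
  rw [homoth_eq_lineMap, AffineMap.apply_lineMap, AffineMap.lineMap_apply_ring', coord_cent]
  ring

theorem lineThru_homoth_cent_neg_two (hij : i ≠ j) (hil : i ≠ l) (hjl : j ≠ l) :
    lineThru (homoth (cent (b 0) (b 1) (b 2)) (-2) (b i))
      (homoth (cent (b 0) (b 1) (b 2)) (-2) (b j)) = {q | b.coord l q = 1} := by
  rw [lineThru_eq_range_lineMap]
  ext q
  constructor
  · rintro ⟨t, rfl⟩
    norm_num [AffineMap.apply_lineMap, coord_homoth_cent, hil.symm, hjl.symm]
  · intro hq
    refine ⟨(b.coord j q - 1) / (-2), eq_of_coord_eq_of_ne b hjl ?_ ?_⟩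
    · rw [AffineMap.apply_lineMap, AffineMap.lineMap_apply_ring']
      simp only [coord_homoth_cent, b.coord_apply_eq, b.coord_apply_ne hij.symm]
      ring
    · rw [AffineMap.apply_lineMap, AffineMap.lineMap_apply_ring']
      simp only [coord_homoth_cent, b.coord_apply_ne hil.symm, b.coord_apply_ne hjl.symm, hq.out]
      ring

theorem par_iff_exists_smul {u v : Pt} (hu : u ≠ 0) : Par u v ↔ ∃ t : ℝ, v = t • u := by
  refine ⟨?_, fun ⟨t, ht⟩ => ⟨t, Or.inr ht⟩⟩
  rintro ⟨t, rfl | ht⟩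
  · exact ⟨t⁻¹, (inv_smul_smul₀ (left_ne_zero_of_smul hu) v).symm⟩
  · exact ⟨t, ht⟩

theorem par_vertex_sub_vertex_iff (hij : i ≠ j) (hil : i ≠ l) (hjl : j ≠ l) (X Y : Pt) :
    Par (b i - b j) (X - Y) ↔ b.coord l X = b.coord l Y := by
  have hcoord (t : ℝ) (m : Fin 3) : b.coord m (t • (b i - b j) + Y) =
      t * (b.coord m (b i) - b.coord m (b j)) + b.coord m Y := by
    rw [← vadd_eq_add, AffineMap.map_vadd, map_smul, ← vsub_eq_sub, AffineMap.linearMap_vsub]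
    rfl
  rw [par_iff_exists_smul (sub_ne_zero.2 (b.ind.injective.ne hij))]
  constructor
  · rintro ⟨t, ht⟩
    rw [sub_eq_iff_eq_add.1 ht, hcoord]
    simp [hil.symm, hjl.symm]
  · refine fun h => ⟨b.coord i X - b.coord i Y, sub_eq_iff_eq_add.2 ?_⟩
    refine eq_of_coord_eq_of_ne b hil ?_ ?_
    · simp [hcoord, hij]
    · simp [hcoord, hil.symm, hjl.symm, h]

/-- The isotomic conjugate `P' = ι(P)`, with normalised coordinates. It is `0` (junk) if
`coordPairSum b p = 0`, when the isotomic conjugate is a point at infinity. -/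
def isotomicConj (p : Pt) : Pt :=
  (b.coord 1 p * b.coord 2 p / coordPairSum b p) • b 0
    + (b.coord 0 p * b.coord 2 p / coordPairSum b p) • b 1
    + (b.coord 0 p * b.coord 1 p / coordPairSum b p) • b 2

/-- The isotomcomplement `Q = K(P')`. -/
def isotomcomplement (p : Pt) : Pt :=
  homoth (cent (b 0) (b 1) (b 2)) (-(1 / 2)) (isotomicConj b p)

theorem coord_isotomicConj (hij : i ≠ j) (hil : i ≠ l) (hjl : j ≠ l) {p : Pt}
    (hσ : coordPairSum b p ≠ 0) :
    b.coord i (isotomicConj b p) = b.coord j p * b.coord l p / coordPairSum b p := by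
  have h := coord_sum_smul b (w := ![b.coord 1 p * b.coord 2 p / coordPairSum b p,
    b.coord 0 p * b.coord 2 p / coordPairSum b p, b.coord 0 p * b.coord 1 p / coordPairSum b p])
    (by
      simp only [Fin.sum_univ_three, Matrix.cons_val, ← add_div]
      rw [div_eq_one_iff_eq hσ, coordPairSum]
      ring) i
  simp only [Fin.sum_univ_three, Matrix.cons_val] at h
  rw [isotomicConj, h]
  fin_cases i <;> fin_cases j <;> fin_cases l <;> simp at hij hil hjl ⊢ <;> ring

theorem coord_isotomcomplement {p : Pt} (hσ : coordPairSum b p ≠ 0) (i : Fin 3) :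
    b.coord i (isotomcomplement b p) =
      b.coord i p * (1 - b.coord i p) / (2 * coordPairSum b p) := by
  obtain ⟨j, hij, -⟩ := exists_ne_and_ne i i
  obtain ⟨l, hil, hjl⟩ := exists_ne_and_ne i j
  rw [isotomcomplement, coord_homoth_cent, coord_isotomicConj b hij hil hjl hσ]
  field_simp
  rw [coordPairSum_eq_of_distinct b hij hil hjl]
  linear_combination 3 * b.coord i p * sum_coord_of_distinct b hij hil hjl p

/-- The points off the lines `b.coord i = 0` and `b.coord i = 1`, that is, off the extended sides
of the triangle and of its anticomplementary triangle. -/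
def OffSides (p : Pt) : Prop := ∀ i, b.coord i p ≠ 0 ∧ b.coord i p ≠ 1

theorem admissible_iff_offSides (p : Pt) : Admissible (b 0) (b 1) (b 2) p ↔ OffSides b p := by
  unfold Admissible OffSides
  rw [exists_weights_iff b p fun x y z => x ≠ 0 ∧ y ≠ 0 ∧ z ≠ 0 ∧ x ≠ 1 ∧ y ≠ 1 ∧ z ≠ 1,
    forall_fin_three]
  tauto

theorem isGenOrtho_iff (p h : Pt) : IsGenOrtho (b 0) (b 1) (b 2) p h ↔
    OffSides b p ∧ coordPairSum b p ≠ 0 ∧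
      ∀ i, Par (h - b i) (cevianTrace b i p - isotomcomplement b p) := by
  have trace₀ {q} := eq_cevianTrace_iff b (i := 0) (j := 1) (l := 2) (p := p) (q := q)
    (by decide) (by decide) (by decide)
  have trace₁ {q} := eq_cevianTrace_iff b (i := 1) (j := 0) (l := 2) (p := p) (q := q)
    (by decide) (by decide) (by decide)
  have trace₂ {q} := eq_cevianTrace_iff b (i := 2) (j := 0) (l := 1) (p := p) (q := q)
    (by decide) (by decide) (by decide)
  constructor
  · rintro ⟨x, y, z, P', Q, D, E, F, hs, hp, hx, hy, hz, hx1, hy1, hz1, hσ, rfl, rfl,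
      hD, hD', hE, hE', hF, hF', hpar⟩
    have hoff : OffSides b p :=
      (admissible_iff_offSides b p).1 ⟨x, y, z, hs, hp, hx, hy, hz, hx1, hy1, hz1⟩
    obtain ⟨rfl, rfl, rfl⟩ := (weights_iff_eq_coord b p).1 ⟨hs, hp⟩
    obtain rfl := (trace₀ hx1).2 ⟨hD, hD'⟩
    obtain rfl := (trace₁ hy1).2 ⟨hE, hE'⟩
    obtain rfl := (trace₂ hz1).2 ⟨hF, hF'⟩
    exact ⟨hoff, hσ, forall_fin_three.2 hpar⟩
  · rintro ⟨hoff, hσ, hpar⟩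
    obtain ⟨x, y, z, hs, hp, hx, hy, hz, hx1, hy1, hz1⟩ := (admissible_iff_offSides b p).2 hoff
    obtain ⟨rfl, rfl, rfl⟩ := (weights_iff_eq_coord b p).1 ⟨hs, hp⟩
    obtain ⟨hD, hD'⟩ := (trace₀ hx1).1 rfl
    obtain ⟨hE, hE'⟩ := (trace₁ hy1).1 rfl
    obtain ⟨hF, hF'⟩ := (trace₂ hz1).1 rfl
    exact ⟨_, _, _, isotomicConj b p, isotomcomplement b p, _, _, _, hs, hp, hx, hy, hz,
      hx1, hy1, hz1, hσ, rfl, rfl, hD, hD', hE, hE', hF, hF', forall_fin_three.1 hpar⟩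

/-- The conic `σ = x²`, where `x` is the barycentric coordinate at the vertex `b i` and `σ` is
`coordPairSum`; for `b 0 = A` it is the conic `C̄_A`. -/
def vertexConic (i : Fin 3) : Set Pt := {p | coordPairSum b p = b.coord i p ^ 2}

theorem par_vertex_sub_cevianTrace_sub_iff (hij : i ≠ j) (hil : i ≠ l) (hjl : j ≠ l) {p : Pt}
    (hj : b.coord j p ≠ 1) (hl : b.coord l p ≠ 0) (hσ : coordPairSum b p ≠ 0) :
    Par (b i - b j) (cevianTrace b j p - isotomcomplement b p) ↔ p ∈ vertexConic b i := by
  have hjl_eq := one_sub_coord_mul_one_sub_coord b hij hil hjl p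
  rw [par_vertex_sub_vertex_iff b hij hil hjl, coord_cevianTrace_of_ne b hjl,
    coord_isotomcomplement b hσ, div_eq_div_iff (sub_ne_zero.2 hj.symm) (by simpa using hσ),
    mul_assoc, mul_right_inj' hl]
  constructor <;> intro (h : _ = _)
  · change coordPairSum b p = _
    linear_combination h + hjl_eq
  · linear_combination h - hjl_eq

theorem isGenOrtho_vertex_iff (i : Fin 3) (p : Pt) :
    IsGenOrtho (b 0) (b 1) (b 2) p (b i) ↔ OffSides b p ∧ p ∈ vertexConic b i := by
  rw [isGenOrtho_iff]
  constructor
  · rintro ⟨hoff, hσ, hpar⟩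
    obtain ⟨j, hij, -⟩ := exists_ne_and_ne i i
    obtain ⟨l, hil, hjl⟩ := exists_ne_and_ne i j
    exact ⟨hoff, (par_vertex_sub_cevianTrace_sub_iff b hij hil hjl
      (hoff j).2 (hoff l).1 hσ).1 (hpar j)⟩
  · rintro ⟨hoff, hp⟩
    have hσ : coordPairSum b p ≠ 0 := hp.out ▸ pow_ne_zero 2 (hoff i).1
    refine ⟨hoff, hσ, fun j => ?_⟩
    rcases eq_or_ne i j with rfl | hij
    · exact ⟨0, Or.inl (by simp)⟩
    obtain ⟨l, hil, hjl⟩ := exists_ne_and_ne i j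
    exact (par_vertex_sub_cevianTrace_sub_iff b hij hil hjl (hoff j).2 (hoff l).1 hσ).2 hp

theorem vertex_mem_vertexConic (hij : i ≠ j) : b j ∈ vertexConic b i := by
  obtain ⟨l, hil, hjl⟩ := exists_ne_and_ne i j
  simp [vertexConic, coordPairSum_eq_of_distinct b hij hil hjl, hij, hjl.symm]

theorem midpoint_mem_vertexConic (hij : i ≠ j) : midpoint ℝ (b i) (b j) ∈ vertexConic b i := by
  obtain ⟨l, hil, hjl⟩ := exists_ne_and_ne i j
  simp [vertexConic, coordPairSum_eq_of_distinct b hij hil hjl, midpoint_eq_add_div_two, hij,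
    hij.symm, hil.symm, hjl.symm, sq]

theorem one_sub_coord_mul_of_mem_vertexConic (hij : i ≠ j) (hil : i ≠ l) (hjl : j ≠ l) {p : Pt}
    (hp : p ∈ vertexConic b i) :
    (1 - b.coord j p) * (1 - b.coord l p) = 2 * b.coord i p ^ 2 := by
  linear_combination one_sub_coord_mul_one_sub_coord b hij hil hjl p + hp.out

theorem coord_self_ne_zero_of_mem_vertexConic {p : Pt} (hp : p ∈ vertexConic b i)
    (hvertex : ∀ j ≠ i, p ≠ b j) : b.coord i p ≠ 0 := by
  intro hi
  obtain ⟨j, hij, -⟩ := exists_ne_and_ne i i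
  obtain ⟨l, hil, hjl⟩ := exists_ne_and_ne i j
  have hprod := one_sub_coord_mul_of_mem_vertexConic b hij hil hjl hp
  have eq_vertex {m : Fin 3} (him : i ≠ m) (hm : 1 - b.coord m p = 0) : p = b m :=
    eq_of_coord_eq_of_ne b him (by rw [hi, b.coord_apply_ne him])
      (by rw [b.coord_apply_eq]; linear_combination -hm)
  rw [hi, zero_pow two_ne_zero, mul_zero] at hprod
  rcases mul_eq_zero.1 hprod with hj | hl
  · exact hvertex j hij.symm (eq_vertex hij hj)
  · exact hvertex l hil.symm (eq_vertex hil hl)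

theorem coord_self_ne_one_of_mem_vertexConic {p : Pt} (hp : p ∈ vertexConic b i) :
    b.coord i p ≠ 1 := by
  intro hi
  obtain ⟨j, hij, -⟩ := exists_ne_and_ne i i
  obtain ⟨l, hil, hjl⟩ := exists_ne_and_ne i j
  have hl : b.coord l p = -b.coord j p := by
    linear_combination sum_coord_of_distinct b hij hil hjl p - hi
  have hprod := one_sub_coord_mul_of_mem_vertexConic b hij hil hjl hp
  rw [hi, hl] at hprod
  nlinarith [sq_nonneg (b.coord j p)]

theorem offSides_of_mem_vertexConic {p : Pt} (hp : p ∈ vertexConic b i)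
    (hvertex : ∀ j ≠ i, p ≠ b j) (hmidpoint : ∀ j ≠ i, p ≠ midpoint ℝ (b i) (b j)) :
    OffSides b p := by
  have hi := coord_self_ne_zero_of_mem_vertexConic b hp hvertex
  intro j
  rcases eq_or_ne i j with rfl | hij
  · exact ⟨hi, coord_self_ne_one_of_mem_vertexConic b hp⟩
  obtain ⟨l, hil, hjl⟩ := exists_ne_and_ne i j
  refine ⟨fun hj => hmidpoint l hil.symm ?_, fun hj => hi ?_⟩
  · have hl : b.coord l p = b.coord i p := by
      refine mul_left_cancel₀ hi ?_
      have h := hp.out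
      rw [coordPairSum_eq_of_distinct b hij hil hjl, hj] at h
      linear_combination h
    have hsum := sum_coord_of_distinct b hij hil hjl p
    refine eq_of_coord_eq_of_ne b hil ?_ ?_ <;>
      rw [AffineMap.map_midpoint, midpoint_eq_add_div_two, b.coord_apply_eq] <;>
      simp only [b.coord_apply_ne hil, b.coord_apply_ne hil.symm] <;>
      linarith
  · simpa [hj] using one_sub_coord_mul_of_mem_vertexConic b hij hil hjl hp

/-- Coefficients, in the sense of `qval`, of the polynomial `(1 - y) (1 - z) - 2 x²` defining
`vertexConic b i`, where `x`, `y`, `z` are the barycentric coordinates at `b i`, `b j`, `b l`. -/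
def vertexConicCoeff (i j l : Fin 3) : Fin 6 → ℝ :=
  bitangentCoeff (AffineMap.const ℝ Pt 1 - b.coord j) (AffineMap.const ℝ Pt 1 - b.coord l)
    (b.coord i) 2

theorem vertexConicCoeff_comm (i j l : Fin 3) :
    vertexConicCoeff b i j l = vertexConicCoeff b i l j :=
  bitangentCoeff_comm _ _ _ _

theorem vertexConic_eq_setOf_qval (hij : i ≠ j) (hil : i ≠ l) (hjl : j ≠ l) :
    vertexConic b i = {p | qval (vertexConicCoeff b i j l) p = 0} := by
  ext p
  have hprod := one_sub_coord_mul_one_sub_coord b hij hil hjl p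
  have hq : qval (vertexConicCoeff b i j l) p = coordPairSum b p - b.coord i p ^ 2 := by
    rw [vertexConicCoeff, qval_bitangentCoeff]
    simp only [AffineMap.coe_sub, Pi.sub_apply, AffineMap.const_apply]
    linear_combination hprod
  change _ ↔ qval _ p = 0
  rw [hq, sub_eq_zero]
  rfl

theorem isTangentLineAt_vertexConicCoeff (hij : i ≠ j) (hil : i ≠ l) (hjl : j ≠ l) :
    IsTangentLineAt (vertexConicCoeff b i j l)
      (lineThru (homoth (cent (b 0) (b 1) (b 2)) (-2) (b i))
        (homoth (cent (b 0) (b 1) (b 2)) (-2) (b l))) (b j) := by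
  have htangent := isTangentLineAt_bitangentCoeff (f := AffineMap.const ℝ Pt 1 - b.coord j)
    (g := AffineMap.const ℝ Pt 1 - b.coord l) (h := b.coord i) (r := 2) (p := b j) (q := b i)
    (by simp) (by simp [hjl.symm]) (by simp [hij]) (by simp [hij.symm])
  have hline : {q | b.coord j q = 1} =
      {q | (AffineMap.const ℝ Pt 1 - b.coord j : Pt →ᵃ[ℝ] ℝ) q = 0} := by
    ext q
    simp [sub_eq_zero, eq_comm (a := (1 : ℝ))]
  rwa [lineThru_homoth_cent_neg_two b hil hij hjl.symm, hline]

/-- The conic contains `b j` and `b l` but not their midpoint, so its equation has degree 2. -/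
theorem vertexConicCoeff_quadratic_ne_zero (hij : i ≠ j) (hil : i ≠ l) (hjl : j ≠ l) :
    ¬(vertexConicCoeff b i j l 0 = 0 ∧ vertexConicCoeff b i j l 1 = 0 ∧
      vertexConicCoeff b i j l 2 = 0) := by
  rintro ⟨h₀, h₁, h₂⟩
  have hmid := qval_midpoint_of_quadratic_eq_zero h₀ h₁ h₂ (b j) (b l)
  norm_num [vertexConicCoeff, qval_bitangentCoeff, midpoint_eq_add_div_two, hij, hil, hjl, hjl.symm]
    at hmid

end Plane

theorem locus_of_P_with_H_eq_A
    (A B C : Pt) (hABC : AffineIndependent ℝ ![A, B, C])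
    (S : Set Pt)
    (hS : S = {p : Pt | ∃ x y z : ℝ, x + y + z = 1 ∧ p = x • A + y • B + z • C ∧
        x * y + x * z + y * z = x ^ 2}) :
    B ∈ S ∧ C ∈ S ∧ midpoint ℝ C A ∈ S ∧ midpoint ℝ A B ∈ S ∧
    (∃ c : Fin 6 → ℝ, ¬(c 0 = 0 ∧ c 1 = 0 ∧ c 2 = 0) ∧ S = {p : Pt | qval c p = 0} ∧
      IsTangentLineAt c
        (lineThru (homoth (cent A B C) (-2) A) (homoth (cent A B C) (-2) C)) B ∧
      IsTangentLineAt c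
        (lineThru (homoth (cent A B C) (-2) A) (homoth (cent A B C) (-2) B)) C) ∧
    (∀ P H : Pt, IsGenOrtho A B C P H → H = A → P ∈ S) ∧
    (∀ P : Pt, P ∈ S → P ≠ B → P ≠ C → P ≠ midpoint ℝ C A → P ≠ midpoint ℝ A B →
      Admissible A B C P ∧ IsGenOrtho A B C P A) := by
  obtain ⟨b, rfl, rfl, rfl⟩ := exists_affineBasis_of_affineIndependent_s19 (by simp) hABC
  have ⟨h01, h02, h12⟩ : (0 : Fin 3) ≠ 1 ∧ (0 : Fin 3) ≠ 2 ∧ (1 : Fin 3) ≠ 2 := by decide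
  obtain rfl : S = vertexConic b 0 := by
    ext P
    rw [hS, Set.mem_ofPred_eq, exists_weights_iff b P fun x y z => x * y + x * z + y * z = x ^ 2,
      ← coordPairSum_eq_of_distinct b h01 h02 h12]
    rfl
  rw [midpoint_comm (b 2)]
  refine ⟨vertex_mem_vertexConic b h01, vertex_mem_vertexConic b h02,
    midpoint_mem_vertexConic b h02, midpoint_mem_vertexConic b h01,
    ⟨vertexConicCoeff b 0 1 2, vertexConicCoeff_quadratic_ne_zero b h01 h02 h12,
      vertexConic_eq_setOf_qval b h01 h02 h12, isTangentLineAt_vertexConicCoeff b h01 h02 h12,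
      vertexConicCoeff_comm b 0 1 2 ▸ isTangentLineAt_vertexConicCoeff b h02 h01 h12.symm⟩,
    ?_, fun P hP hB hC hE hF => ?_⟩
  · rintro P _ hP rfl
    exact ((isGenOrtho_vertex_iff b 0 P).1 hP).2
  · have hoff : OffSides b P := offSides_of_mem_vertexConic b hP
      (by simp [forall_fin_three, hB, hC]) (by simp [forall_fin_three, hE, hF])
    exact ⟨(admissible_iff_offSides b P).2 hoff, (isGenOrtho_vertex_iff b 0 P).2 ⟨hoff, hP⟩⟩
end
end
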